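/- arXiv:1905.05723 — 3 statements merged into one kernel-verified Lean document; each statement's English description precedes it below -/
import Mathlib

section
/- The ideal I = ⟨σ_{k+1}, σ_{k+2}, ..., σ_n⟩ of S = ℚ[c₁,...,c_m] (where n = m+k) contains σ_p for all p > k, and as a ℚ-vector space, I has a basis consisting of all σ_λ with ℓ(λ) ≤ m and λ₁ > k. -/
/-- The sequence `c = (c_1, …, c_m, 0, 0, …)` of variables of `S = ℚ[c_1, …, c_m]`,
with `c_0 = 1` and `c_i = 0` for `i < 0` or `i > m`. -/
noncomputable def cVar (m : ℕ) : ℤ → MvPolynomial (Fin m) ℚ := fun i =>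
  if h : 1 ≤ i ∧ i ≤ (m : ℤ) then MvPolynomial.X ⟨(i - 1).toNat, by omega⟩
  else if i = 0 then 1 else 0

/-- `σ_p = Δ_{(1^p)}(c) = det(c_{1+j-i})_{p×p}`, extended by `σ_p = 0` for `p < 0`. -/
noncomputable def sigmaP (m : ℕ) : ℤ → MvPolynomial (Fin m) ℚ := fun p =>
  if p < 0 then 0
  else Matrix.det (Matrix.of fun i j : Fin p.toNat => cVar m (1 + (j : ℤ) - (i : ℤ)))

/-- `σ_λ = Δ_λ(σ) = det(σ_{λ_i+j-i})`. -/
noncomputable def sigmaL (m : ℕ) {l : ℕ} (lam : Fin l → ℕ) : MvPolynomial (Fin m) ℚ :=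
  Matrix.det (Matrix.of fun i j : Fin l => sigmaP m ((lam i : ℤ) + (j : ℤ) - (i : ℤ)))

namespace SigmaAux
open Finset MvPolynomial

/-- The generating series `∑ (-1)^i c_i t^i`. -/
noncomputable def cSer (m : ℕ) : PowerSeries (MvPolynomial (Fin m) ℚ) :=
  PowerSeries.mk fun i => (-1) ^ i * cVar m (i : ℤ)

/-- Its inverse, the generating series of the `σ_p`. -/
noncomputable def hSer (m : ℕ) : PowerSeries (MvPolynomial (Fin m) ℚ) :=
  PowerSeries.invOfUnit (cSer m) 1

lemma cVar_zero (m : ℕ) : cVar m 0 = 1 := by simp [cVar]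

lemma cVar_neg (m : ℕ) (i : ℤ) (h : i < 0) : cVar m i = 0 := by
  unfold cVar
  rw [dif_neg (by omega), if_neg (by omega)]

lemma cVar_big (m : ℕ) (i : ℤ) (h : (m : ℤ) < i) : cVar m i = 0 := by
  unfold cVar
  rw [dif_neg (by omega), if_neg (by omega)]

lemma cVar_succ (m : ℕ) (r : Fin m) : cVar m ((r : ℤ) + 1) = X r := by
  unfold cVar
  rw [dif_pos (by omega)]
  congr 1
  ext
  simp

lemma cSer_mul (m : ℕ) : cSer m * hSer m = 1 := by
  apply PowerSeries.mul_invOfUnit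
  rw [← PowerSeries.coeff_zero_eq_constantCoeff_apply]
  simp [cSer, cVar_zero]

lemma hSer_zero (m : ℕ) : PowerSeries.coeff 0 (hSer m) = 1 := by
  rw [hSer, PowerSeries.coeff_invOfUnit]; simp

lemma hSer_rec (m p : ℕ) : ∑ s ∈ range (p + 2),
    (-1) ^ s * cVar m (s : ℤ) * PowerSeries.coeff (p + 1 - s) (hSer m) = 0 := by
  have h := congrArg (PowerSeries.coeff (p + 1)) (cSer_mul m)
  rw [PowerSeries.coeff_mul, Finset.Nat.sum_antidiagonal_eq_sum_range_succ_mk] at h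
  simpa [cSer, PowerSeries.coeff_one] using h

lemma sigmaP_neg (m : ℕ) (p : ℤ) (h : p < 0) : sigmaP m p = 0 := by
  simp [sigmaP, h]

lemma mulVec_eq (m q : ℕ) :
    (Matrix.of fun i j : Fin (q + 1) => cVar m (1 + (j : ℤ) - (i : ℤ))).mulVec
      (fun j => (-1) ^ (j : ℕ) * PowerSeries.coeff (q - j) (hSer m)) =
    Pi.single 0 (PowerSeries.coeff (q + 1) (hSer m)) := by
  ext1 i
  simp only [Matrix.mulVec, dotProduct, Matrix.of_apply]
  rw [Fin.sum_univ_eq_sum_range (fun j => cVar m (1 + (j : ℤ) - (i : ℤ)) *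
    ((-1) ^ (j : ℕ) * PowerSeries.coeff (q - j) (hSer m)))]
  induction i using Fin.cases with
  | zero =>
    have h := hSer_rec m q
    rw [Finset.sum_range_succ'] at h
    simp only [pow_zero, Nat.cast_zero, cVar_zero, Nat.sub_zero, one_mul] at h
    rw [Pi.single_eq_same]
    rw [add_comm] at h
    rw [eq_neg_of_add_eq_zero_left h, ← Finset.sum_neg_distrib]
    apply Finset.sum_congr rfl
    intro j hj
    rw [Nat.add_sub_add_right]
    have : (1 + (j : ℤ) - ((0 : Fin (q + 1)) : ℕ)) = ((j + 1 : ℕ) : ℤ) := by simp; ring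
    rw [this]
    ring
  | succ i =>
    rw [Pi.single_eq_of_ne (Fin.succ_ne_zero i)]
    obtain ⟨d, hd⟩ : ∃ d, q = i + (d + 1) := ⟨q - i - 1, by omega⟩
    have hq : q + 1 = (i : ℕ) + (d + 2) := by omega
    have hr : range (q + 1) = range ((i : ℕ) + (d + 2)) := by rw [hq]
    rw [hr, Finset.sum_range_add]
    rw [Finset.sum_eq_zero, zero_add]
    · have h := hSer_rec m d
      calc _ = (-1) ^ (i : ℕ) * ∑ s ∈ range (d + 2),
          (-1) ^ s * cVar m (s : ℤ) * PowerSeries.coeff (d + 1 - s) (hSer m) := by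
            rw [Finset.mul_sum]
            apply Finset.sum_congr rfl
            intro s hs
            have h1 : (1 + ((i + s : ℕ) : ℤ) - ((Fin.succ i : Fin (q + 1)) : ℕ)) = (s : ℤ) := by
              push_cast [Fin.val_succ]; ring
            have h2 : q - (i + s) = d + 1 - s := by omega
            rw [h1, h2, pow_add]
            ring
        _ = 0 := by rw [h, mul_zero]
    · intro j hj
      rw [Finset.mem_range] at hj
      rw [cVar_neg, zero_mul]
      push_cast [Fin.val_succ]
      omega

lemma sigmaP_nat (m p : ℕ) : sigmaP m (p : ℤ) = PowerSeries.coeff p (hSer m) := by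
  unfold sigmaP
  rw [if_neg (by omega)]
  change Matrix.det (Matrix.of fun i j : Fin p => cVar m (1 + (j : ℤ) - (i : ℤ))) = _
  cases p with
  | zero => simp [hSer_zero]
  | succ q =>
    set A := (Matrix.of fun i j : Fin (q + 1) => cVar m (1 + (j : ℤ) - (i : ℤ))) with hA
    have h := mulVec_eq m q
    rw [← hA] at h
    have h2 := congrArg (fun v => A.adjugate.mulVec v (Fin.last q)) h
    rw [Matrix.mulVec_mulVec, Matrix.adjugate_mul, Matrix.smul_mulVec, Matrix.one_mulVec,
      ← Matrix.cramer_eq_adjugate_mulVec, Matrix.cramer_apply,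
      Matrix.det_succ_column (A.updateCol _ _) (Fin.last q), Finset.sum_eq_single 0] at h2
    · have h3 : ((A.updateCol (Fin.last q) (Pi.single 0 (PowerSeries.coeff (q + 1) (hSer m)))).submatrix
          (Fin.succAbove 0) (Fin.last q).succAbove).det = 1 := by
        rw [Matrix.det_of_isUpperTriangular]
        · apply Finset.prod_eq_one
          intro i _
          simp [Matrix.updateCol_apply, hA, Fin.succAbove_last, Fin.castSucc_ne_last, cVar_zero,
            add_comm]
        · intro i j hij
          have hij' : (j : ℕ) < i := hij
          simp only [Matrix.submatrix_apply, Matrix.updateCol_apply, hA, Fin.succAbove_last, 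
            Fin.castSucc_ne_last, if_false, Matrix.of_apply, Fin.succAbove_zero]
          apply cVar_neg
          simp
          omega
      rw [h3] at h2
      simp [hSer_zero] at h2
      have h4 : ((-1 : MvPolynomial (Fin m) ℚ) ^ q) * (-1) ^ q = 1 := by
        rw [← mul_pow]; simp
      linear_combination (-1) ^ q * h2 + (PowerSeries.coeff (q+1) (hSer m) - A.det) * h4
    · intro i _ hi
      rw [Matrix.updateCol_self, Pi.single_eq_of_ne hi]
      ring
    · simp

/-- The homomorphism `c_i ↦ e_i(x)`. -/
noncomputable def phi (m : ℕ) : MvPolynomial (Fin m) ℚ →ₐ[ℚ] MvPolynomial (Fin m) ℚ :=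
  aeval fun i : Fin m => esymm (Fin m) ℚ (i + 1)

lemma phi_inj (m : ℕ) : Function.Injective (phi m) := by
  intro p q h
  apply esymmAlgHom_fin_injective (n := m) (m := m) ℚ le_rfl
  apply Subtype.ext
  rw [esymmAlgHom_apply, esymmAlgHom_apply]
  exact h

lemma phi_cVar (m i : ℕ) : phi m (cVar m i) = esymm (Fin m) ℚ i := by
  rcases Nat.eq_zero_or_pos i with h | h
  · subst h; simp [cVar_zero]
  · by_cases hi : i ≤ m
    · obtain ⟨j, rfl⟩ : ∃ j, i = j + 1 := ⟨i - 1, by omega⟩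
      have := cVar_succ m ⟨j, by omega⟩
      simp only at this
      push_cast
      rw [this]
      simp [phi]
    · rw [cVar_big _ _ (by omega), map_zero, esymm, Finset.powersetCard_eq_empty.mpr, Finset.sum_empty]
      simp; omega

lemma phi_cSer (m : ℕ) : PowerSeries.map (phi m).toRingHom (cSer m) =
    ∏ l : Fin m, (1 - PowerSeries.C (X l : MvPolynomial (Fin m) ℚ) * PowerSeries.X) := by
  simp_rw [sub_eq_add_neg]
  rw [Finset.prod_one_add, Finset.sum_powerset]
  ext1 n
  rw [map_sum]
  have key : ∀ j, PowerSeries.coeff n (∑ t ∈ powersetCard j (univ : Finset (Fin m)),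
      ∏ i ∈ t, -(PowerSeries.C (X i : MvPolynomial (Fin m) ℚ) * PowerSeries.X)) =
      if n = j then (-1) ^ j * esymm (Fin m) ℚ j else 0 := by
    intro j
    have : ∑ t ∈ powersetCard j (univ : Finset (Fin m)),
      ∏ i ∈ t, -(PowerSeries.C (X i : MvPolynomial (Fin m) ℚ) * PowerSeries.X) =
      PowerSeries.C ((-1) ^ j * esymm (Fin m) ℚ j) * PowerSeries.X ^ j := by
      rw [esymm, Finset.mul_sum, map_sum, Finset.sum_mul]
      apply Finset.sum_congr rfl
      intro t ht
      rw [Finset.mem_powersetCard] at ht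
      rw [Finset.prod_neg, Finset.prod_mul_distrib, Finset.prod_const, ht.2]
      simp [mul_assoc]
    rw [this, PowerSeries.coeff_C_mul_X_pow]
  simp_rw [key]
  rw [PowerSeries.coeff_map, cSer, PowerSeries.coeff_mk]
  simp only [map_mul, map_pow, map_neg, map_one, AlgHom.toRingHom_eq_coe, RingHom.coe_coe, phi_cVar]
  rw [Finset.sum_ite_eq]
  split_ifs with h
  · rfl
  · have : m < n := by simpa using h
    rw [← phi_cVar, cVar_big _ _ (by omega)]; simp

/-- The product of all factors one minus x t except the one with index l. -/
noncomputable def ePoly (m : ℕ) (l : Fin m) : Polynomial (MvPolynomial (Fin m) ℚ) :=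
  ∏ l' ∈ univ.erase l, (1 - Polynomial.C (X l') * Polynomial.X)

lemma ePoly_coeff_big (m : ℕ) (l : Fin m) (n : ℕ) (h : m ≤ n) : (ePoly m l).coeff n = 0 := by
  apply Polynomial.coeff_eq_zero_of_natDegree_lt
  have h1 : (ePoly m l).natDegree ≤ ∑ l' ∈ univ.erase l, 1 := by
    refine (Polynomial.natDegree_prod_le _ _).trans (Finset.sum_le_sum ?_)
    intro i _
    compute_degree
  have := l.2
  simp at h1
  omega

lemma ser_pow (m : ℕ) (l : Fin m) :
    (ePoly m l : PowerSeries (MvPolynomial (Fin m) ℚ)) *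
      PowerSeries.map (phi m).toRingHom (hSer m) = PowerSeries.mk fun n => X l ^ n := by
  have h1 := congrArg (PowerSeries.map (phi m).toRingHom) (cSer_mul m)
  rw [map_mul, phi_cSer, map_one, ← Finset.mul_prod_erase univ _ (Finset.mem_univ l)] at h1
  have h2 : (ePoly m l : PowerSeries (MvPolynomial (Fin m) ℚ)) =
      ∏ l' ∈ univ.erase l, (1 - PowerSeries.C (X l') * PowerSeries.X) := by
    rw [ePoly, ← Polynomial.coeToPowerSeries.ringHom_apply, map_prod]
    apply Finset.prod_congr rfl
    intro i _
    simp
  rw [← h2] at h1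
  have h3 : (PowerSeries.mk fun n => (X l : MvPolynomial (Fin m) ℚ) ^ n) *
      (1 - PowerSeries.C (X l) * PowerSeries.X) = 1 := by
    ext1 n
    rw [mul_sub, mul_one, ← mul_assoc, map_sub]
    cases n with
    | zero => simp
    | succ n => 
      rw [PowerSeries.coeff_succ_mul_X, mul_comm, PowerSeries.coeff_C_mul]
      simp [PowerSeries.coeff_one, pow_succ']
  linear_combination (PowerSeries.mk fun n => (X l : MvPolynomial (Fin m) ℚ) ^ n) * h1 -
    (ePoly m l : PowerSeries (MvPolynomial (Fin m) ℚ)) *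
      PowerSeries.map (phi m).toRingHom (hSer m) * h3

lemma sum_sigma (m : ℕ) (l : Fin m) (n : ℕ) :
    ∑ s ∈ range m, (ePoly m l).coeff s * phi m (sigmaP m ((n : ℤ) - s)) = X l ^ n := by
  have h := congrArg (PowerSeries.coeff n) (ser_pow m l)
  rw [PowerSeries.coeff_mul, Finset.Nat.sum_antidiagonal_eq_sum_range_succ_mk,
    PowerSeries.coeff_mk] at h
  rw [← h]
  trans ∑ s ∈ range (n + 1 + m), (ePoly m l).coeff s * phi m (sigmaP m ((n : ℤ) - s))
  · apply Finset.sum_subset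
    · intro x; simp; omega
    · intro x _ hx
      rw [ePoly_coeff_big _ _ _ (by simpa using hx), zero_mul]
  · symm
    have : ∀ s ∈ range n.succ, PowerSeries.coeff s (ePoly m l : PowerSeries (MvPolynomial (Fin m) ℚ)) *
       PowerSeries.coeff (n - s) (PowerSeries.map (phi m).toRingHom (hSer m)) =
       (ePoly m l).coeff s * phi m (sigmaP m ((n : ℤ) - s)) := by
      intro s hs
      have hs' : s ≤ n := by simpa [Nat.lt_succ_iff] using hs
      rw [← Nat.cast_sub hs', sigmaP_nat]
      simp
    rw [Finset.sum_congr rfl this]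
    apply Finset.sum_subset
    · intro x; simp; omega
    · intro x _ hx
      rw [sigmaP_neg, map_zero, mul_zero]
      simp at hx
      omega

/-- The alternant `det (x_l ^ b_i)`. -/
noncomputable def alt (m : ℕ) (b : Fin m → ℕ) : MvPolynomial (Fin m) ℚ :=
  Matrix.det (Matrix.of fun i l : Fin m => (X l : MvPolynomial (Fin m) ℚ) ^ b i)

/-- `λ + δ`. -/
def shift (m : ℕ) (lam : Fin m → ℕ) : Fin m → ℕ := fun i => lam i + (m - 1 - i)

noncomputable def vDet (m : ℕ) : MvPolynomial (Fin m) ℚ :=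
  Matrix.det (Matrix.of fun j l : Fin m => (ePoly m l).coeff (m - 1 - j))

lemma sigma_alt (m : ℕ) (lam : Fin m → ℕ) :
    phi m (sigmaL m lam) * vDet m = alt m (shift m lam) := by
  rw [sigmaL, AlgHom.map_det, vDet, ← Matrix.det_mul, alt]
  congr 1
  ext1 i l
  rw [Matrix.mul_apply, Matrix.of_apply, ← sum_sigma m l, ← Finset.sum_range_reflect,
    ← Fin.sum_univ_eq_sum_range (fun j => (ePoly m l).coeff (m - 1 - j) *
      phi m (sigmaP m (((shift m lam i : ℕ) : ℤ) - (m - 1 - j : ℕ))))]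
  apply Finset.sum_congr rfl
  intro j _
  have : ((shift m lam i : ℕ) : ℤ) - (m - 1 - j : ℕ) = (lam i : ℤ) + j - i := by
    unfold shift
    have := i.2
    have := j.2
    omega
  rw [this, mul_comm]
  simp

lemma perm_eq_one (m : ℕ) (p : Equiv.Perm (Fin m)) (h : StrictMono p) : p = 1 := by
  have := Subsingleton.elim (h.orderIsoOfSurjective p p.surjective) (OrderIso.refl _)
  ext1 i
  exact congrArg (fun f : Fin m ≃o Fin m => f i) this

lemma alt_coeff (m : ℕ) (b b' : Fin m → ℕ) (hb : StrictAnti b) (hb' : StrictAnti b') :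
    coeff (Finsupp.equivFunOnFinite.symm b') (alt m b) = if b = b' then 1 else 0 := by
  rw [alt, Matrix.det_apply, coeff_sum]
  have key : ∀ p : Equiv.Perm (Fin m), coeff (Finsupp.equivFunOnFinite.symm b')
      (Equiv.Perm.sign p • ∏ i, Matrix.of (fun i l : Fin m => (X l : MvPolynomial (Fin m) ℚ) ^ b i)
        (p i) i) = if p = 1 ∧ b = b' then 1 else 0 := by
    intro p
    have h1 : ∏ i, Matrix.of (fun i l : Fin m => (X l : MvPolynomial (Fin m) ℚ) ^ b i)
        (p i) i = monomial (Finsupp.equivFunOnFinite.symm (b ∘ p)) 1 := by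
      rw [monomial_eq]
      simp [Finsupp.prod_fintype]
    rw [h1]
    by_cases hp : b ∘ p = b'
    · have : p = 1 := by
        apply perm_eq_one
        intro i j hij
        have := hb' hij
        rw [← hp] at this
        exact hb.lt_iff_gt.mp this
      subst this
      have hbb : b = b' := by simpa using hp
      subst hbb
      simp
    · have h2 : ¬ (p = 1 ∧ b = b') := by
        rintro ⟨rfl, rfl⟩
        exact hp (by ext; simp)
      rw [if_neg h2]
      have h3 : Finsupp.equivFunOnFinite.symm (b ∘ p) ≠ Finsupp.equivFunOnFinite.symm b' := by
        simpa using hp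
      rw [Units.smul_def, coeff_smul, coeff_monomial, if_neg h3, smul_zero]
  rw [Finset.sum_congr rfl (fun p _ => key p)]
  by_cases h : b = b' <;> simp [h]

lemma shift_strictAnti (m : ℕ) (lam : Fin m → ℕ) (h : ∀ i j : Fin m, i ≤ j → lam j ≤ lam i) :
    StrictAnti (shift m lam) := by
  intro i j hij
  have := h i j hij.le
  have h2 : (i : ℕ) < j := hij
  have := j.2
  unfold shift
  omega

lemma sigmaL_single (m p : ℕ) (hm : 0 < m) :
    sigmaL m (fun i : Fin m => if (i : ℕ) = 0 then p else 0) = sigmaP m p := by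
  have h0 : sigmaP m 0 = 1 := by
    have := sigmaP_nat m 0
    rw [hSer_zero] at this
    exact_mod_cast this
  obtain ⟨n, rfl⟩ : ∃ n, m = n + 1 := ⟨m - 1, by omega⟩
  rw [sigmaL, Matrix.det_of_isUpperTriangular, Fin.prod_univ_succ]
  · simp [h0]
  · intro i j hij
    have hij' : (j : ℕ) < i := hij
    rw [Matrix.of_apply, if_neg (by omega), sigmaP_neg]
    simp; omega

lemma vDet_ne (m : ℕ) (hm : 0 < m) : vDet m ≠ 0 := by
  intro h
  have h1 := sigma_alt m (fun _ => 0)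
  rw [h, mul_zero] at h1
  have h2 := shift_strictAnti m (fun _ => 0) (by simp)
  have := alt_coeff m _ _ h2 h2
  rw [← h1] at this
  simp at this

lemma linInd (m : ℕ) : LinearIndependent ℚ
    (fun lam : {lam : Fin m → ℕ // (∀ i j : Fin m, i ≤ j → lam j ≤ lam i)} => sigmaL m lam.1) := by
  rw [linearIndependent_iff']
  intro s g hg i hi
  have h := congrArg (fun x => phi m x * vDet m) hg
  simp only [map_sum, map_smul, Finset.sum_mul, smul_mul_assoc, sigma_alt, map_zero, zero_mul] at h
  have h2 := congrArg (coeff (Finsupp.equivFunOnFinite.symm (shift m i.1))) h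
  rw [coeff_sum] at h2
  rw [Finset.sum_eq_single i] at h2
  · rw [coeff_smul, alt_coeff _ _ _ (shift_strictAnti _ _ i.2) (shift_strictAnti _ _ i.2)] at h2
    simpa using h2
  · intro j _ hj
    rw [coeff_smul, alt_coeff _ _ _ (shift_strictAnti _ _ j.2) (shift_strictAnti _ _ i.2), if_neg,
      smul_zero]
    intro h
    apply hj
    apply Subtype.ext
    ext x
    have := congrFun h x
    unfold shift at this
    omega
  · exact fun h => absurd hi h

lemma alt_pieri (m r : ℕ) (b : Fin m → ℕ) :
    esymm (Fin m) ℚ r * alt m b =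
      ∑ T ∈ powersetCard r univ, alt m (fun i => b i + if i ∈ T then 1 else 0) := by
  simp only [alt]
  simp_rw [← Matrix.det_transpose (Matrix.of _)]
  simp_rw [Matrix.det_apply]
  rw [Finset.sum_comm, Finset.mul_sum]
  apply Finset.sum_congr rfl
  intro p _
  rw [← Finset.smul_sum, mul_smul_comm]
  congr 1
  have h := rename_esymm (Fin m) ℚ r p
  rw [← h, esymm, map_sum, Finset.sum_mul]
  apply Finset.sum_congr rfl
  intro T _
  simp only [Matrix.transpose_apply, Matrix.of_apply, pow_add, Finset.prod_mul_distrib, map_prod,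
    rename_X]
  rw [mul_comm]
  congr 1
  simp [pow_ite, Finset.prod_ite_mem]

lemma sigma_pieri (m : ℕ) (hm : 0 < m) (r : Fin m) (lam : Fin m → ℕ) :
    X r * sigmaL m lam =
      ∑ T ∈ powersetCard (r + 1) univ, sigmaL m (fun i => lam i + if i ∈ T then 1 else 0) := by
  apply phi_inj m
  apply mul_right_cancel₀ (vDet_ne m hm)
  rw [map_mul, map_sum, Finset.sum_mul, mul_assoc, sigma_alt]
  simp_rw [sigma_alt]
  have : phi m (X r) = esymm (Fin m) ℚ (r + 1) := by simp [phi]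
  rw [this, alt_pieri]
  apply Finset.sum_congr rfl
  intro T _
  congr 1
  ext i
  simp only [shift]
  omega

lemma sigma_step (m k : ℕ) (hm : 0 < m) (lam : Fin m → ℕ)
    (hl : ∀ i j : Fin m, i ≤ j → lam j ≤ lam i) (T : Finset (Fin m)) :
    sigmaL m (fun i => lam i + if i ∈ T then 1 else 0) = 0 ∨
    (∀ i j : Fin m, i ≤ j → (lam j + if j ∈ T then 1 else 0) ≤ (lam i + if i ∈ T then 1 else 0)) := by
  set mu : Fin m → ℕ := fun i => lam i + if i ∈ T then 1 else 0 with hmu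
  by_cases h : Function.Injective (shift m mu)
  · right
    intro i j hij
    change mu j ≤ mu i
    have hs : StrictAnti (shift m mu) := by
      have : Antitone (shift m mu) := by
        intro i j hij
        rcases hij.eq_or_lt with rfl | hlt
        · rfl
        have h1 := shift_strictAnti m lam hl hlt
        simp only [shift, hmu] at h1 ⊢
        split_ifs <;> omega
      exact this.strictAnti_of_injective h
    obtain ⟨n, rfl⟩ : ∃ n, m = n + 1 := ⟨m - 1, by omega⟩
    have : Antitone mu := by
      rw [Fin.antitone_iff_succ_le]
      intro i
      have := hs (Fin.castSucc_lt_succ (i := i))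
      simp only [shift, Fin.val_succ, Fin.val_castSucc] at this
      omega
    exact this hij
  · left
    apply phi_inj m
    apply mul_right_cancel₀ (vDet_ne m hm)
    rw [sigma_alt, map_zero, zero_mul, alt]
    rw [Function.Injective] at h
    push Not at h
    obtain ⟨i, j, hij, hne⟩ := h
    apply Matrix.det_zero_of_row_eq hne
    ext1 l
    simp [hij]

lemma sigma_mem (m k : ℕ) (hm : 0 < m) (p : ℕ) (hp : k < p) :
      sigmaP m (p : ℤ) ∈
        Ideal.span ((fun p : ℤ => sigmaP m p) '' Set.Icc ((k : ℤ) + 1) ((m : ℤ) + k)) := by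
  induction p using Nat.strong_induction_on with
  | _ p ih =>
  by_cases h : p ≤ m + k
  · apply Ideal.subset_span
    exact ⟨p, ⟨by omega, by omega⟩, rfl⟩
  · obtain ⟨q, rfl⟩ : ∃ q, p = q + 1 := ⟨p - 1, by omega⟩
    have h := hSer_rec m q
    rw [Finset.sum_range_succ'] at h
    simp only [pow_zero, Nat.cast_zero, cVar_zero, Nat.sub_zero, one_mul] at h
    rw [add_comm] at h
    rw [sigmaP_nat, eq_neg_of_add_eq_zero_left h]
    apply neg_mem
    apply sum_mem
    intro s hs
    by_cases hsm : s + 1 ≤ m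
    · apply Ideal.mul_mem_left
      rw [← sigmaP_nat]
      apply ih <;> omega
    · rw [cVar_big _ _ (by push_cast; omega)]
      simp

end SigmaAux

/-- The ideal `I = ⟨σ_{k+1}, …, σ_n⟩` of `S = ℚ[c_1, …, c_m]` (with `n = m + k`)
contains `σ_p` for all `p > k`, and as a `ℚ`-vector space it has a basis consisting
of all `σ_λ` with `ℓ(λ) ≤ m` and `λ_1 > k` (encoded as weakly decreasing
`m`-tuples with some part `> k`). -/
theorem sigma_ideal_basis (m k : ℕ) (hm : 0 < m) (hk : 0 < k) :
    (∀ p : ℤ, (k : ℤ) < p →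
      sigmaP m p ∈
        Ideal.span ((fun p : ℤ => sigmaP m p) '' Set.Icc ((k : ℤ) + 1) ((m : ℤ) + k))) ∧
    LinearIndependent ℚ
      (fun lam : {lam : Fin m → ℕ //
          (∀ i j : Fin m, i ≤ j → lam j ≤ lam i) ∧ ∃ i, k < lam i} =>
        sigmaL m lam.1) ∧
    Submodule.span ℚ
      (Set.range fun lam : {lam : Fin m → ℕ //
          (∀ i j : Fin m, i ≤ j → lam j ≤ lam i) ∧ ∃ i, k < lam i} =>
        sigmaL m lam.1) =
      Submodule.restrictScalars ℚ
        (Ideal.span ((fun p : ℤ => sigmaP m p) '' Set.Icc ((k : ℤ) + 1) ((m : ℤ) + k))) := by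
  have hmem : ∀ p : ℤ, (k : ℤ) < p →
      sigmaP m p ∈
        Ideal.span ((fun p : ℤ => sigmaP m p) '' Set.Icc ((k : ℤ) + 1) ((m : ℤ) + k)) := by
    intro p hp
    obtain ⟨n, rfl⟩ := Int.eq_ofNat_of_zero_le (show 0 ≤ p by omega)
    exact SigmaAux.sigma_mem m k hm n (by omega)
  refine ⟨hmem, ?_, ?_⟩
  · exact (SigmaAux.linInd m).comp
      (fun lam : {lam : Fin m → ℕ //
          (∀ i j : Fin m, i ≤ j → lam j ≤ lam i) ∧ ∃ i, k < lam i} => ⟨lam.1, lam.2.1⟩)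
      (fun a b h => Subtype.ext (congrArg (fun x => x.1) h))
  · set J := Submodule.span ℚ
      (Set.range fun lam : {lam : Fin m → ℕ //
          (∀ i j : Fin m, i ≤ j → lam j ≤ lam i) ∧ ∃ i, k < lam i} =>
        sigmaL m lam.1) with hJ
    apply le_antisymm
    · rw [hJ, Submodule.span_le]
      rintro _ ⟨⟨lam, h1, i, hi⟩, rfl⟩
      obtain ⟨n, rfl⟩ : ∃ n, m = n + 1 := ⟨m - 1, by omega⟩
      have h0 := h1 0 i (Fin.zero_le i)
      simp only [SetLike.mem_coe, Submodule.restrictScalars_mem]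
      rw [sigmaL, Matrix.det_succ_row_zero]
      apply sum_mem
      intro j _
      apply Ideal.mul_mem_right
      apply Ideal.mul_mem_left
      rw [Matrix.of_apply]
      apply hmem
      simp
      omega
    · have hX : ∀ (r : Fin m), ∀ x ∈ J, MvPolynomial.X r * x ∈ J := by
        intro r x hx
        induction hx using Submodule.span_induction with
        | mem x hx =>
          obtain ⟨⟨lam, h1, i, hi⟩, rfl⟩ := hx
          simp only
          rw [SigmaAux.sigma_pieri m hm]
          apply sum_mem
          intro T _
          rcases SigmaAux.sigma_step m k hm lam h1 T with h | h
          · rw [h]; exact zero_mem _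
          · apply Submodule.subset_span
            exact ⟨⟨_, h, i, by omega⟩, rfl⟩
        | zero => rw [mul_zero]; exact zero_mem _
        | add x y _ _ hx hy => rw [mul_add]; exact add_mem hx hy
        | smul a x _ hx => rw [mul_smul_comm]; exact Submodule.smul_mem _ _ hx
      have hS : ∀ (f : MvPolynomial (Fin m) ℚ), ∀ x ∈ J, f * x ∈ J := by
        intro f
        induction f using MvPolynomial.induction_on with
        | C a => intro x hx; rw [← MvPolynomial.smul_eq_C_mul]; exact Submodule.smul_mem _ _ hx
        | add p q hp hq => intro x hx; rw [add_mul]; exact add_mem (hp x hx) (hq x hx)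
        | mul_X p r hp => intro x hx; rw [mul_assoc]; exact hp _ (hX r x hx)
      intro x hx
      rw [Submodule.restrictScalars_mem] at hx
      induction hx using Submodule.span_induction with
      | mem x hx =>
        obtain ⟨p, ⟨hp1, hp2⟩, rfl⟩ := hx
        obtain ⟨n, rfl⟩ := Int.eq_ofNat_of_zero_le (show 0 ≤ p by omega)
        simp only
        rw [← SigmaAux.sigmaL_single m n hm]
        apply Submodule.subset_span
        refine ⟨⟨(fun i : Fin m => if (i : ℕ) = 0 then n else 0), ?_, ⟨0, hm⟩, ?_⟩, rfl⟩
        · intro i j hij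
          have : (i : ℕ) ≤ j := hij
          dsimp only
          split_ifs <;> omega
        · simp; omega
      | zero => exact zero_mem _
      | add x y _ _ hx hy => exact add_mem hx hy
      | smul a x _ hx => exact hS a x hx
end

section
/- Let QH_α = S[q]/⟨σ_{k+1},...,σ_{n-1}, σ_n + (-1)^m α q⟩ where S = ℚ[c₁,...,c_m], n = m+k, and α ∈ ℚ. Then for every 1 ≤ p ≤ m and every partition λ ⊆ m×k, the quantum Pieri formula holds in QH_α: c_p·σ_λ = Σ_μ σ_μ + Σ_ν α q σ_ν, where the first sum runs over partitions μ ⊆ m×k obtained by adding a vertical strip of p boxes to λ, and the second sum is empty unless λ₁ = k, in which case it runs over partitions ν obtained by removing n−p boxes from the outer rim of λ with at least one box removed from each column. -/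
/-- The deformed quantum ring `QH_α = S[q]/⟨σ_{k+1}, …, σ_{n-1}, σ_n + (-1)^m α q⟩`
is the quotient of `Polynomial (MvPolynomial (Fin m) ℚ)` by this ideal. -/
noncomputable def qhIdeal (m k : ℕ) (α : ℚ) :
    Ideal (Polynomial (MvPolynomial (Fin m) ℚ)) :=
  Ideal.span
    ((fun p : ℤ => Polynomial.C (sigmaP m p)) '' Set.Icc ((k : ℤ) + 1) ((m : ℤ) + k - 1) ∪
      {Polynomial.C (sigmaP m ((m : ℤ) + k)) +
        (-1) ^ m * Polynomial.C (MvPolynomial.C α) * Polynomial.X})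

section Helpers
open Finset Matrix

/-- bidiagonal matrix with modified corner and last column -/
def bidiag {R : Type*} [CommRing R] (t : R) (n : ℕ) (a : R) (g : ℕ → R) :
    Matrix (Fin (n + 1)) (Fin (n + 1)) R :=
  Matrix.of fun i j =>
    if (j : ℕ) = n then g i
    else if (i : ℕ) = j then (if (i : ℕ) = 0 then a else 1)
    else if (i : ℕ) = j + 1 then t else 0

lemma bidiag_det {R : Type*} [CommRing R] (t : R) (n : ℕ) : ∀ (a : R) (g : ℕ → R),
    (bidiag t n a g).det =
      (-t) ^ n * g 0 + a * ∑ i ∈ range n, (-t) ^ (n - 1 - i) * g (i + 1) := by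
  induction n with
  | zero => intro a g; simp [bidiag]
  | succ n ih =>
    intro a g
    rw [det_succ_column_zero, Fin.sum_univ_succ, Fin.sum_univ_succ]
    have h0 : (bidiag t (n+1) a g).submatrix (Fin.succAbove 0) Fin.succ
        = bidiag t n 1 (fun i => g (i + 1)) := by
      ext i j
      simp [bidiag]
    have h1 : (bidiag t (n+1) a g).submatrix (Fin.succAbove (Fin.succ 0)) Fin.succ
        = bidiag t n 0 (fun i => if i = 0 then g 0 else g (i + 1)) := by
      ext i j
      refine Fin.cases ?_ (fun i => ?_) i
      · simp [bidiag]
      · simp [bidiag]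
    rw [h0, h1, ih, ih]
    have h2 : ∀ i : Fin n, bidiag t (n+1) a g i.succ.succ 0 = 0 := by
      intro i; simp [bidiag]
    have h3 : bidiag t (n+1) a g 0 0 = a := by simp [bidiag]
    have h4 : bidiag t (n+1) a g (Fin.succ 0) 0 = t := by simp [bidiag]
    simp only [h2, h3, h4]
    rw [sum_range_succ']
    have h5 : ∀ i ∈ range n, (-t) ^ (n + 1 - 1 - (i+1)) * g (i + 1 + 1)
        = (-t) ^ (n - 1 - i) * g (i + 1 + 1) := by
      intro i hi
      congr 2; omega
    rw [sum_congr rfl h5]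
    simp
    ring

lemma key_pieri {R : Type*} [CommRing R] (n p : ℕ) (hp1 : 1 ≤ p) (hp : p ≤ n + 1)
    (h c : ℤ → R) (a : Fin (n + 1) → ℤ)
    (hrec : ∀ i, h (a i + (n + 1)) =
      ∑ l ∈ range (n + 1), (-1) ^ l * c (l + 1) * h (a i + n - l)) :
    c p * (Matrix.of fun i j : Fin (n + 1) => h (a i + j)).det =
      ∑ s ∈ (univ : Finset (Finset (Fin (n + 1)))).filter (fun s => s.card = p),
        (Matrix.of fun i j : Fin (n + 1) => h (a i + (if i ∈ s then 1 else 0) + j)).det := by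
  set A : Matrix (Fin (n + 1)) (Fin (n + 1)) R := Matrix.of fun i j => h (a i + j) with hA
  set A' : Matrix (Fin (n + 1)) (Fin (n + 1)) R := Matrix.of fun i j => h (a i + 1 + j) with hA'
  let t : Polynomial R := Polynomial.X
  let g : ℕ → Polynomial R := fun i => (if i = n then 1 else 0) +
    t * Polynomial.C ((-1) ^ (n - i) * c ((n - i : ℕ) + 1))
  have hprod : (A.map Polynomial.C) * bidiag t n (if n = 0 then 0 else 1) g =
      A.map Polynomial.C + t • A'.map Polynomial.C := by
    ext1 i j
    rw [Matrix.mul_apply]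
    by_cases hj : (j : ℕ) = n
    · have e1 : ∀ x : Fin (n+1), bidiag t n (if n = 0 then 0 else 1) g x j = g x := by
        intro x; simp [bidiag, hj]
      simp only [e1, g, mul_add, sum_add_distrib]
      have hjl : j = Fin.last n := Fin.ext hj
      subst hjl
      have e2 : ∀ x : Fin (n+1), ((x : ℕ) = n) ↔ x = Fin.last n := by
        intro x; rw [Fin.ext_iff]; simp
      simp only [e2]
      simp only [Matrix.add_apply, Matrix.map_apply, Matrix.smul_apply, smul_eq_mul]
      congr 1
      · simp
      · simp only [hA, hA', Matrix.of_apply]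
        have e3 : a i + 1 + ((Fin.last n : Fin (n+1)) : ℕ) = a i + (n + 1) := by
          simp; ring
        rw [e3, hrec, ← Finset.sum_range_reflect, map_sum, mul_sum,
          ← Fin.sum_univ_eq_sum_range (fun l => t * Polynomial.C ((-1) ^ (n + 1 - 1 - l) * c ((n + 1 - 1 - l : ℕ) + 1) * h (a i + n - (n + 1 - 1 - l : ℕ))))]
        refine sum_congr rfl fun x _ => ?_
        have e4 : a i + n - (n + 1 - 1 - (x : ℕ) : ℕ) = a i + (x : ℕ) := by omega
        rw [e4]
        simp only [Nat.add_sub_cancel, map_mul]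
        ring
    · have hjlt : (j : ℕ) < n := by omega
      have hn0 : n ≠ 0 := by omega
      have e1 : ∀ x : Fin (n+1), bidiag t n (if n = 0 then 0 else 1) g x j =
          (if x = j then 1 else 0) + (if x = (⟨j + 1, by omega⟩ : Fin (n+1)) then t else 0) := by
        intro x
        simp only [bidiag, hj, hn0, Matrix.of_apply, if_false, ite_self, Fin.ext_iff]
        by_cases h1 : (x : ℕ) = j
        · simp [h1]
        · simp [h1]
      simp only [e1, mul_add, sum_add_distrib]
      simp [hA, hA']
      rw [mul_comm]
      congr 3; ring
  have hdet : (bidiag t n (if n = 0 then 0 else 1) g).det =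
      1 + ∑ l ∈ range (n + 1), t ^ (l + 1) * Polynomial.C (c (l + 1)) := by
    have e0 : (bidiag t n (if n = 0 then 0 else 1) g).det =
        ∑ i ∈ range (n + 1), (-t) ^ (n - i) * g i := by
      rw [bidiag_det, sum_range_succ']
      by_cases hn : n = 0
      · subst hn; simp
      · simp only [hn, if_false, one_mul]
        rw [add_comm]
        congr 1
        refine sum_congr rfl fun i hi => ?_
        congr 2; omega
    rw [e0]
    simp only [g, mul_add, sum_add_distrib]
    congr 1
    · simp
    · rw [← Finset.sum_range_reflect (fun l => t ^ (l + 1) * Polynomial.C (c ((l:ℤ) + 1)))]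
      refine sum_congr rfl fun i hi => ?_
      simp only [Nat.add_sub_cancel, map_mul, map_pow, map_neg, map_one]
      rw [neg_pow, pow_succ]
      have : ((-1 : Polynomial R) ^ (n - i)) * (-1) ^ (n - i) = 1 := by
        rw [← mul_pow]; simp
      linear_combination (t ^ (n-i) * t * Polynomial.C (c ((n - i : ℕ) + 1))) * this
  have hexp : (A.map Polynomial.C + t • A'.map Polynomial.C).det =
      ∑ s : Finset (Fin (n + 1)), t ^ s.card * Polynomial.C
        (Matrix.of fun i j : Fin (n + 1) => h (a i + (if i ∈ s then 1 else 0) + j)).det := by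
    rw [add_comm (A.map Polynomial.C)]
    have := (Matrix.detRowAlternating (R := Polynomial R) (n := Fin (n+1))).map_add_univ
      (t • A'.map Polynomial.C) (A.map Polynomial.C)
    refine this.trans (sum_congr rfl fun s _ => ?_)
    rw [RingHom.map_det]
    have e : s.piecewise (t • A'.map Polynomial.C) (A.map Polynomial.C) =
        fun i => (if i ∈ s then t else 1) • ((Polynomial.C.mapMatrix (Matrix.of fun i j : Fin (n + 1) => h (a i + (if i ∈ s then 1 else 0) + j))) i) := by
      funext i j
      by_cases hi : i ∈ s
      · simp [hi, hA', Finset.piecewise]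
      · simp [hi, hA, Finset.piecewise]
    rw [e]
    have := (Matrix.detRowAlternating (R := Polynomial R) (n := Fin (n+1))).toMultilinearMap.map_smul_univ
      (fun i => if i ∈ s then t else 1) (Polynomial.C.mapMatrix (Matrix.of fun i j : Fin (n + 1) => h (a i + (if i ∈ s then 1 else 0) + j)))
    refine this.trans ?_
    simp [Finset.prod_ite_mem]
    rfl
  rw [← hprod, det_mul, hdet] at hexp
  have hco := congrArg (fun f => Polynomial.coeff f p) hexp
  have hdc : (A.map Polynomial.C).det = Polynomial.C A.det := by
    rw [RingHom.map_det]; rfl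
  simp only [hdc, Polynomial.coeff_C_mul, Polynomial.finsetSum_coeff, Polynomial.coeff_add, t,
    Polynomial.coeff_mul_C, Polynomial.coeff_X_pow, Polynomial.coeff_one] at hco
  rw [sum_filter]
  have e5 : ∑ l ∈ range (n + 1), (if p = l + 1 then (1:R) else 0) * c (l + 1) = c p := by
    rw [sum_eq_single_of_mem (p - 1) (by simp; omega)]
    · have : p = p - 1 + 1 := by omega
      rw [if_pos this, one_mul]; congr 1; omega
    · intro b _ hb
      rw [if_neg (by omega), zero_mul]
  rw [e5, if_neg (by omega), zero_add, mul_comm] at hco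
  rw [hco]
  refine sum_congr rfl fun s _ => ?_
  by_cases hs : s.card = p
  · simp [hs]
  · simp [hs, Ne.symm hs]

lemma cVar_zero (m : ℕ) : cVar m 0 = 1 := by simp [cVar]
lemma cVar_neg (m : ℕ) {i : ℤ} (hi : i < 0) : cVar m i = 0 := by
  unfold cVar; rw [dif_neg (by omega), if_neg (by omega)]
lemma cVar_gt (m : ℕ) {i : ℤ} (hi : (m : ℤ) < i) : cVar m i = 0 := by
  unfold cVar; rw [dif_neg (by omega), if_neg (by omega)]

lemma sigmaP_nat (m r : ℕ) : sigmaP m r =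
    (Matrix.of fun i j : Fin r => cVar m (1 + (j : ℤ) - (i : ℤ))).det := by
  unfold sigmaP
  rw [if_neg (by omega)]
  rfl

lemma sigmaP_neg (m : ℕ) {i : ℤ} (hi : i < 0) : sigmaP m i = 0 := by
  unfold sigmaP; rw [if_pos hi]

lemma sigmaP_zero (m : ℕ) : sigmaP m 0 = 1 := by
  have := sigmaP_nat m 0
  simpa using this

lemma hess_det (m r : ℕ) : ∀ f : ℕ → MvPolynomial (Fin m) ℚ,
    (Matrix.of fun i j : Fin (r + 1) =>
      if (i : ℕ) = 0 then f j else cVar m (1 + (j : ℤ) - (i : ℤ))).det =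
    ∑ l ∈ range (r + 1), (-1) ^ l * f l * sigmaP m (r - l : ℕ) := by
  induction r with
  | zero => intro f; simp [sigmaP_zero]
  | succ r ih =>
    intro f
    rw [det_succ_column_zero, Fin.sum_univ_succ, Fin.sum_univ_succ]
    have h0 : ((Matrix.of fun i j : Fin (r + 1 + 1) =>
        if (i : ℕ) = 0 then f j else cVar m (1 + (j : ℤ) - (i : ℤ))).submatrix
          (Fin.succAbove 0) Fin.succ).det = sigmaP m ((r + 1 : ℕ) : ℤ) := by
      rw [sigmaP_nat]
      congr 1
      ext1 i j
      simp only [Matrix.submatrix_apply, Matrix.of_apply, Fin.succAbove_zero, Fin.val_succ]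
      rw [if_neg (by omega)]
      congr 1; push_cast; ring
    have h1 : ((Matrix.of fun i j : Fin (r + 1 + 1) =>
        if (i : ℕ) = 0 then f j else cVar m (1 + (j : ℤ) - (i : ℤ))).submatrix
          (Fin.succAbove (Fin.succ 0)) Fin.succ) = (Matrix.of fun i j : Fin (r + 1) =>
        if (i : ℕ) = 0 then f (j + 1) else cVar m (1 + (j : ℤ) - (i : ℤ))) := by
      ext1 i j
      refine Fin.cases ?_ (fun i => ?_) i
      · simp
      · simp
        congr 1; ring
    rw [h0, h1, ih (fun j => f (j + 1))]
    have h2 : ∀ i : Fin r, (Matrix.of fun i j : Fin (r + 1 + 1) =>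
        if (i : ℕ) = 0 then f j else cVar m (1 + (j : ℤ) - (i : ℤ))) i.succ.succ 0 = 0 := by
      intro i
      simp only [Matrix.of_apply, Fin.val_succ]
      rw [if_neg (by omega), cVar_neg]
      simp; omega
    simp only [h2]
    rw [sum_range_succ' _ (r + 1)]
    have h5 : ∀ i ∈ range (r + 1), (-1) ^ (i + 1) * f (i + 1) * sigmaP m (r + 1 - (i + 1) : ℕ)
        = - ((-1) ^ i * f (i + 1) * sigmaP m (r - i : ℕ)) := by
      intro i hi
      rw [Nat.add_sub_add_right]
      ring
    rw [sum_congr rfl h5, sum_neg_distrib]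
    simp [cVar_zero]
    ring

lemma sigmaP_rec (m r : ℕ) : sigmaP m ((r : ℤ) + 1) =
    ∑ l ∈ range (r + 1), (-1) ^ l * cVar m (l + 1) * sigmaP m ((r : ℤ) - l) := by
  have h := hess_det m r (fun j => cVar m (j + 1))
  have e : sigmaP m ((r : ℤ) + 1) = sigmaP m ((r + 1 : ℕ) : ℤ) := by push_cast; rfl
  rw [e, sigmaP_nat]
  have e2 : (Matrix.of fun i j : Fin (r + 1) => cVar m (1 + (j : ℤ) - (i : ℤ))) =
      (Matrix.of fun i j : Fin (r + 1) =>
      if (i : ℕ) = 0 then cVar m ((j : ℕ) + 1) else cVar m (1 + (j : ℤ) - (i : ℤ))) := by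
    ext1 i j
    simp only [Matrix.of_apply]
    split_ifs with hi
    · rw [hi]; congr 1; push_cast; ring
    · rfl
  rw [e2, h]
  refine sum_congr rfl fun l hl => ?_
  rw [mem_range] at hl
  congr 2; omega

lemma sigmaP_rec' (m r : ℕ) : sigmaP m ((r : ℤ) + 1) =
    ∑ l ∈ range m, (-1) ^ l * cVar m (l + 1) * sigmaP m ((r : ℤ) - l) := by
  rw [sigmaP_rec]
  have hl : ∑ l ∈ range (r + 1), (-1) ^ l * cVar m (l + 1) * sigmaP m ((r : ℤ) - l) =
      ∑ l ∈ range (r + 1 + m), (-1) ^ l * cVar m (l + 1) * sigmaP m ((r : ℤ) - l) := by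
    refine sum_subset (range_subset_range.2 (by omega)) fun x _ hx => ?_
    rw [mem_range] at hx
    rw [sigmaP_neg _ (by omega), mul_zero]
  have hr : ∑ l ∈ range m, (-1) ^ l * cVar m (l + 1) * sigmaP m ((r : ℤ) - l) =
      ∑ l ∈ range (r + 1 + m), (-1) ^ l * cVar m (l + 1) * sigmaP m ((r : ℤ) - l) := by
    refine sum_subset (range_subset_range.2 (by omega)) fun x _ hx => ?_
    rw [mem_range] at hx
    rw [cVar_gt _ (by omega)]; simp
  rw [hl, hr]

lemma pieri_subsets (n p : ℕ) (hp1 : 1 ≤ p) (hp : p ≤ n + 1) (lam : Fin (n + 1) → ℕ) :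
    cVar (n + 1) p * sigmaL (n + 1) lam =
      ∑ s ∈ (univ : Finset (Finset (Fin (n + 1)))).filter (fun s => s.card = p),
        sigmaL (n + 1) (fun i => lam i + if i ∈ s then 1 else 0) := by
  have h := key_pieri n p hp1 hp (sigmaP (n + 1)) (cVar (n + 1)) (fun i => (lam i : ℤ) - i) (by
    intro i
    obtain ⟨r, hr⟩ : ∃ r : ℕ, (r : ℤ) = (lam i : ℤ) - i + n := ⟨(lam i + n - i), by omega⟩
    have := sigmaP_rec' (n + 1) r
    rw [hr] at this
    rw [← add_assoc]
    exact this)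
  unfold sigmaL
  convert h using 3
  · ext1 i j
    simp only [Matrix.of_apply]
    congr 1; ring
  · ext1 i j
    simp only [Matrix.of_apply]
    congr 1
    push_cast
    ring

lemma sigmaL_zero_of_not_anti (m : ℕ) (lam mu : Fin m → ℕ)
    (hanti : ∀ i j : Fin m, i ≤ j → lam j ≤ lam i)
    (hs : ∀ i, lam i ≤ mu i ∧ mu i ≤ lam i + 1)
    (hn : ¬ ∀ i j : Fin m, i ≤ j → mu j ≤ mu i) : sigmaL m mu = 0 := by
  have hex : ∃ i j : Fin m, (j : ℕ) = i + 1 ∧ mu i < mu j := by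
    by_contra! hcon
    apply hn
    intro i j hij
    obtain ⟨d, hd⟩ : ∃ d : ℕ, (j : ℕ) = i + d := ⟨j - i, by have : (i : ℕ) ≤ j := hij; omega⟩
    clear hij
    induction d generalizing j with
    | zero => rw [show j = i from Fin.ext (by omega)]
    | succ d ih =>
      have h1 := ih ⟨i + d, by omega⟩ rfl
      have h2 := hcon ⟨i + d, by omega⟩ j (by simp; omega)
      omega
  obtain ⟨i, j, hij, hlt⟩ := hex
  have h1 := hs i
  have h2 := hs j
  have h3 := hanti i j (by rw [Fin.le_def]; omega)
  unfold sigmaL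
  refine Matrix.det_zero_of_row_eq (i := i) (j := j) (by intro h; rw [h] at hij; omega) ?_
  funext x
  simp only [Matrix.of_apply]
  congr 1
  omega

open scoped Classical in
/-- Classical Pieri in `m` variables. -/
lemma pieri_classical (n k p : ℕ) (hp1 : 1 ≤ p) (hp : p ≤ n + 1) (lam : Fin (n + 1) → ℕ)
    (hanti : ∀ i j : Fin (n + 1), i ≤ j → lam j ≤ lam i) (hbound : ∀ i, lam i ≤ k) :
    cVar (n + 1) p * sigmaL (n + 1) lam =
      ∑ mu ∈ (Fintype.piFinset fun _ : Fin (n + 1) => Finset.range (k + 2)) |>.filter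
          (fun mu : Fin (n + 1) → ℕ =>
            (∀ i j : Fin (n + 1), i ≤ j → mu j ≤ mu i) ∧
            (∀ i, lam i ≤ mu i ∧ mu i ≤ lam i + 1) ∧
            (∑ i, mu i) = (∑ i, lam i) + p), sigmaL (n + 1) mu := by
  rw [pieri_subsets n p hp1 hp]
  have hsub : ∑ mu ∈ (Fintype.piFinset fun _ : Fin (n + 1) => Finset.range (k + 2)) |>.filter
          (fun mu : Fin (n + 1) → ℕ =>
            (∀ i j : Fin (n + 1), i ≤ j → mu j ≤ mu i) ∧
            (∀ i, lam i ≤ mu i ∧ mu i ≤ lam i + 1) ∧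
            (∑ i, mu i) = (∑ i, lam i) + p), sigmaL (n + 1) mu =
      ∑ mu ∈ (Fintype.piFinset fun _ : Fin (n + 1) => Finset.range (k + 2)) |>.filter
          (fun mu : Fin (n + 1) → ℕ =>
            (∀ i, lam i ≤ mu i ∧ mu i ≤ lam i + 1) ∧
            (∑ i, mu i) = (∑ i, lam i) + p), sigmaL (n + 1) mu := by
    refine sum_subset ?_ ?_
    · intro mu; simp only [mem_filter]; tauto
    · intro mu h1 h2
      simp only [mem_filter] at h1 h2
      exact sigmaL_zero_of_not_anti _ lam mu hanti h1.2.1 (fun h => h2 ⟨h1.1, h, h1.2⟩)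
  rw [hsub]
  refine sum_bij' (fun s _ => fun i => lam i + if i ∈ s then 1 else 0)
    (fun mu _ => univ.filter (fun i => mu i = lam i + 1)) ?_ ?_ ?_ ?_ ?_
  · intro s hs
    simp only [mem_filter, mem_univ, true_and, Fintype.mem_piFinset, mem_range] at hs ⊢
    refine ⟨?_, ?_, ?_⟩
    · intro i; have := hbound i; split_ifs <;> omega
    · intro i; split_ifs <;> omega
    · rw [sum_add_distrib, ← hs]; simp
  · intro mu hmu
    simp only [mem_filter, mem_univ, true_and, Fintype.mem_piFinset, mem_range] at hmu ⊢
    have : ∀ i, mu i = lam i + if mu i = lam i + 1 then 1 else 0 := by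
      intro i; have := hmu.2.1 i; split_ifs <;> omega
    have h2 := hmu.2.2
    rw [sum_congr rfl (fun i _ => this i), sum_add_distrib] at h2
    rw [card_filter]
    omega
  · intro s _
    ext i
    simp
  · intro mu hmu
    simp only [mem_filter, mem_univ, true_and, Fintype.mem_piFinset, mem_range] at hmu ⊢
    funext i
    have := hmu.2.1 i; split_ifs <;> omega
  · intro s _; rfl

lemma quot_zero (m k : ℕ) (α : ℚ) (r : ℤ) (h1 : (k : ℤ) + 1 ≤ r) (h2 : r ≤ (m : ℤ) + k - 1) :
    Ideal.Quotient.mk (qhIdeal m k α) (Polynomial.C (sigmaP m r)) = 0 := by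
  rw [Ideal.Quotient.eq_zero_iff_mem]
  exact Ideal.subset_span (Or.inl ⟨r, ⟨h1, h2⟩, rfl⟩)

lemma quot_top (m k : ℕ) (α : ℚ) :
    Ideal.Quotient.mk (qhIdeal m k α) (Polynomial.C (sigmaP m ((m : ℤ) + k))) =
    - ((-1) ^ m * Ideal.Quotient.mk (qhIdeal m k α)
      (Polynomial.C (MvPolynomial.C α) * Polynomial.X)) := by
  have : Ideal.Quotient.mk (qhIdeal m k α) (Polynomial.C (sigmaP m ((m : ℤ) + k)) +
        (-1) ^ m * Polynomial.C (MvPolynomial.C α) * Polynomial.X) = 0 := by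
    rw [Ideal.Quotient.eq_zero_iff_mem]
    exact Ideal.subset_span (Or.inr rfl)
  rw [map_add] at this
  rw [eq_neg_of_add_eq_zero_left this, mul_assoc, map_mul, map_pow, map_neg, map_one]

lemma sigmaL_snoc_zero (m n : ℕ) (nu : Fin (n + 1) → ℕ) (h : nu (Fin.last n) = 0) :
    sigmaL m nu = sigmaL m (fun i : Fin n => nu i.castSucc) := by
  unfold sigmaL
  rw [det_succ_row _ (Fin.last n), Fin.sum_univ_castSucc]
  have h0 : ∀ i : Fin n, (Matrix.of fun i j : Fin (n + 1) =>
      sigmaP m ((nu i : ℤ) + (j : ℤ) - (i : ℤ))) (Fin.last n) i.castSucc = 0 := by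
    intro i
    simp only [Matrix.of_apply]
    apply sigmaP_neg
    rw [h]; simp
  simp only [h0]
  simp only [mul_zero, zero_mul, sum_const_zero, zero_add, Matrix.of_apply, h]
  rw [show (((0 : ℕ) : ℤ) + ((Fin.last n : Fin (n+1)) : ℕ) - ((Fin.last n : Fin (n+1)) : ℕ)) = 0 by simp,
    sigmaP_zero, ← two_mul, pow_mul]
  simp only [neg_one_sq, one_pow, mul_one, one_mul]
  congr 1
  ext1 i j
  simp

/-- shape with first row `k+1`, under a ring map killing the relations. -/
lemma hom_first_row {Q : Type*} [CommRing Q] (n k : ℕ)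
    (φ : MvPolynomial (Fin (n + 1)) ℚ →+* Q) (x : Q)
    (hz : ∀ r : ℤ, (k : ℤ) + 1 ≤ r → r ≤ (n : ℤ) + k → φ (sigmaP (n + 1) r) = 0)
    (ht : φ (sigmaP (n + 1) ((n : ℤ) + 1 + k)) = (-1) ^ n * x)
    (mu : Fin (n + 1) → ℕ) (h : mu 0 = k + 1) :
    φ (sigmaL (n + 1) mu) = x * φ (Matrix.of fun i j : Fin n =>
        sigmaP (n + 1) ((mu i.succ : ℤ) - 1 + (j : ℤ) - (i : ℤ))).det := by
  unfold sigmaL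
  rw [det_succ_row_zero, map_sum, Fin.sum_univ_castSucc]
  have h0 : ∀ i : Fin n, φ ((Matrix.of fun i j : Fin (n + 1) =>
      sigmaP (n + 1) ((mu i : ℤ) + (j : ℤ) - (i : ℤ))) 0 i.castSucc) = 0 := by
    intro i
    simp only [Matrix.of_apply]
    apply hz
    · rw [h]; simp
    · rw [h]; simp; omega
  have h1 : φ ((Matrix.of fun i j : Fin (n + 1) =>
      sigmaP (n + 1) ((mu i : ℤ) + (j : ℤ) - (i : ℤ))) 0 (Fin.last n)) = (-1) ^ n * x := by
    simp only [Matrix.of_apply]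
    rw [← ht]
    congr 2
    rw [h]; simp; ring
  have h2 : ((Matrix.of fun i j : Fin (n + 1) =>
      sigmaP (n + 1) ((mu i : ℤ) + (j : ℤ) - (i : ℤ))).submatrix Fin.succ (Fin.last n).succAbove) =
      (Matrix.of fun i j : Fin n =>
        sigmaP (n + 1) ((mu i.succ : ℤ) - 1 + (j : ℤ) - (i : ℤ))) := by
    ext1 i j
    simp only [Matrix.submatrix_apply, Matrix.of_apply, Fin.succAbove_last]
    congr 1
    simp; ring
  simp only [map_mul, h0, h1, h2]
  simp only [mul_zero, zero_mul, sum_const_zero, zero_add, Fin.val_last, map_pow, map_neg, map_one]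
  have : ∀ x : Q, (-1) ^ n * ((-1) ^ n * x) = x := by
    intro x; rw [← mul_assoc, ← mul_pow]; simp
  rw [this]

lemma det_zero_of_last_zero (m n : ℕ) (mu : Fin (n + 1) → ℕ) (h : mu (Fin.last n) = 0)
    (hn : 0 < n) :
    (Matrix.of fun i j : Fin n =>
        sigmaP m ((mu i.succ : ℤ) - 1 + (j : ℤ) - (i : ℤ))).det = 0 := by
  refine Matrix.det_eq_zero_of_row_eq_zero ⟨n - 1, by omega⟩ fun j => ?_
  simp only [Matrix.of_apply]
  apply sigmaP_neg
  rw [show (⟨n - 1, by omega⟩ : Fin n).succ = Fin.last n from Fin.ext (by simp; omega), h]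
  simp; omega

open scoped Classical in
lemma pieri_hom {Q : Type*} [CommRing Q] (n k p : ℕ) (hk : 0 < k)
    (φ : MvPolynomial (Fin (n + 1)) ℚ →+* Q) (x : Q)
    (hz : ∀ r : ℤ, (k : ℤ) + 1 ≤ r → r ≤ (n : ℤ) + k → φ (sigmaP (n + 1) r) = 0)
    (ht : φ (sigmaP (n + 1) ((n : ℤ) + 1 + k)) = (-1) ^ n * x)
    (hp1 : 1 ≤ p) (hp : p ≤ n + 1) (lam : Fin (n + 1) → ℕ)
    (hanti : ∀ i j : Fin (n + 1), i ≤ j → lam j ≤ lam i) (hbound : ∀ i, lam i ≤ k) :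
    φ (cVar (n + 1) p * sigmaL (n + 1) lam) =
      (∑ mu ∈ (Fintype.piFinset fun _ : Fin (n + 1) => Finset.range (k + 1)) |>.filter
          (fun mu : Fin (n + 1) → ℕ =>
            (∀ i j : Fin (n + 1), i ≤ j → mu j ≤ mu i) ∧
            (∀ i, lam i ≤ mu i ∧ mu i ≤ lam i + 1) ∧
            (∑ i, mu i) = (∑ i, lam i) + p), φ (sigmaL (n + 1) mu)) +
      ∑ nu ∈ (Fintype.piFinset fun _ : Fin (n + 1) => Finset.range (k + 1)) |>.filter
          (fun nu : Fin (n + 1) → ℕ =>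
            lam 0 = k ∧
            (∀ i j : Fin (n + 1), i ≤ j → nu j ≤ nu i) ∧
            (∀ i, nu i ≤ lam i) ∧
            (∑ i, nu i) + (n + 1 + k - p) = (∑ i, lam i) ∧
            (∀ i j : Fin (n + 1), (j : ℕ) = (i : ℕ) + 1 → lam j ≤ nu i + 1) ∧
            (∀ j ∈ Finset.Icc 1 k, ∃ i, nu i < j ∧ j ≤ lam i)),
        x * φ (sigmaL (n + 1) nu) := by
  rw [pieri_classical n k p hp1 hp lam hanti hbound, map_sum,
    ← sum_filter_add_sum_filter_not _ (fun mu => mu 0 ≤ k)]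
  congr 1
  · refine sum_congr ?_ fun _ _ => rfl
    ext mu
    simp only [mem_filter, Fintype.mem_piFinset, mem_range]
    constructor
    · rintro ⟨⟨_, h1, h2⟩, h3⟩
      exact ⟨fun i => by have := h1 0 i (Fin.zero_le i); omega, h1, h2⟩
    · rintro ⟨h1, h2⟩
      exact ⟨⟨fun i => by have := h1 i; omega, h2⟩, by have := h1 0; omega⟩
  · -- discard the shapes with empty last row
    have hsub : ∀ T : Finset (Fin (n + 1) → ℕ), (∀ mu ∈ T, mu 0 = k + 1) →
        ∑ mu ∈ T, φ (sigmaL (n + 1) mu) =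
        ∑ mu ∈ T.filter (fun mu => mu (Fin.last n) ≠ 0), φ (sigmaL (n + 1) mu) := by
      intro T hT
      refine (sum_filter_of_ne fun mu hmu hne => ?_).symm
      intro h0
      apply hne
      rw [hom_first_row n k φ x hz ht mu (hT mu hmu)]
      have hn : 0 < n := by
        by_contra hn
        have hn : n = 0 := by omega
        subst hn
        have := hT mu hmu
        simp only [Fin.last_zero] at h0
        omega
      rw [det_zero_of_last_zero _ n mu h0 hn, map_zero, mul_zero]
    rw [hsub]
    swap
    · intro mu hmu
      simp only [mem_filter, Fintype.mem_piFinset, mem_range] at hmu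
      have := hmu.1.1 0
      omega
    refine sum_bij' (fun mu _ => Fin.snoc (α := fun _ => ℕ) (fun i : Fin n => mu i.succ - 1) 0)
      (fun nu _ => Fin.cons (α := fun _ => ℕ) (k + 1) (fun i : Fin n => nu i.castSucc + 1))
      ?_ ?_ ?_ ?_ ?_
    · intro mu hmu
      simp only [mem_filter, Fintype.mem_piFinset, mem_range] at hmu ⊢
      obtain ⟨⟨⟨hr, ha, hs, hsum⟩, hk0⟩, hl⟩ := hmu
      have hmu0 : mu 0 = k + 1 := by have := hr 0; omega
      have hlam0 : lam 0 = k := by have := hs 0; have := hbound 0; omega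
      have hpos : ∀ i, 1 ≤ mu i := fun i => by have := ha i (Fin.last n) (Fin.le_last i); omega
      have hsn : ∀ i : Fin n, (Fin.snoc (α := fun _ => ℕ) (fun i : Fin n => mu i.succ - 1) 0 :
        Fin (n + 1) → ℕ) i.castSucc = mu i.succ - 1 := fun i => by simp
      have hsl : (Fin.snoc (α := fun _ => ℕ) (fun i : Fin n => mu i.succ - 1) 0 :
        Fin (n + 1) → ℕ) (Fin.last n) = 0 := by simp
      set nu : Fin (n + 1) → ℕ := Fin.snoc (α := fun _ => ℕ) (fun i : Fin n => mu i.succ - 1) 0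
      have hle : ∀ i, nu i ≤ lam i := by
        intro i
        refine Fin.lastCases ?_ (fun i => ?_) i
        · omega
        · rw [hsn]
          have := hs i.succ
          have := hanti i.castSucc i.succ (Fin.castSucc_le_succ i)
          omega
      refine ⟨fun i => by have := hle i; have := hbound i; omega, hlam0, ?_, hle, ?_, ?_, ?_⟩
      · intro i j
        refine Fin.lastCases ?_ (fun j => ?_) j
        · intro _; omega
        · refine Fin.lastCases ?_ (fun i => ?_) i
          · intro h
            have := lt_of_le_of_lt h (Fin.castSucc_lt_last j)
            exact absurd this (lt_irrefl _)
          · intro h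
            rw [hsn, hsn]
            have := ha i.succ j.succ (Fin.succ_le_succ_iff.2 (Fin.castSucc_le_castSucc_iff.1 h))
            omega
      · rw [Fin.sum_univ_castSucc, hsl]
        simp only [hsn]
        rw [Fin.sum_univ_succ] at hsum
        have : ∑ i : Fin n, mu i.succ = ∑ i : Fin n, (mu i.succ - 1) + n := by
          rw [sum_congr rfl (fun i _ => (Nat.sub_add_cancel (hpos (Fin.succ i))).symm),
            sum_add_distrib]
          simp
        omega
      · intro i j hij
        obtain ⟨i', rfl⟩ : ∃ i' : Fin n, i = i'.castSucc := ⟨⟨i, by omega⟩, rfl⟩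
        have hj : j = i'.succ := Fin.ext (by simpa using hij)
        subst hj
        rw [hsn]
        have := hs i'.succ
        omega
      · intro j hj
        rw [mem_Icc] at hj
        by_contra! hcon
        have : ∀ i : Fin (n + 1), j ≤ lam i := by
          intro i
          refine Fin.induction ?_ (fun i hi => ?_) i
          · omega
          · by_contra hlt
            have h1 : nu i.castSucc < j := by
              rw [hsn]; have := hs i.succ; omega
            have := hcon _ h1
            omega
        have h1 := hcon (Fin.last n) (by omega)
        have h2 := this (Fin.last n)
        omega
    · intro nu hnu
      simp only [mem_filter, Fintype.mem_piFinset, mem_range] at hnu ⊢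
      obtain ⟨hr, hl0, ha, hle, hsum, hrim, hcol⟩ := hnu
      have hm0 : (Fin.cons (α := fun _ => ℕ) (k + 1) (fun i : Fin n => nu i.castSucc + 1) :
        Fin (n + 1) → ℕ) 0 = k + 1 := by simp
      have hms : ∀ i : Fin n, (Fin.cons (α := fun _ => ℕ) (k + 1)
        (fun i : Fin n => nu i.castSucc + 1) : Fin (n + 1) → ℕ) i.succ = nu i.castSucc + 1 :=
        fun i => by simp
      set mu : Fin (n + 1) → ℕ := Fin.cons (α := fun _ => ℕ) (k + 1)
        (fun i : Fin n => nu i.castSucc + 1)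
      have hlast : nu (Fin.last n) = 0 := by
        by_contra h
        obtain ⟨i, hi1, hi2⟩ := hcol (nu (Fin.last n))
          (by rw [mem_Icc]; have := hr (Fin.last n); omega)
        have := ha i (Fin.last n) (Fin.le_last i)
        omega
      have hnl : ∀ i : Fin n, nu i.castSucc ≤ lam i.succ := by
        intro i
        by_contra h
        obtain ⟨i', hi1, hi2⟩ := hcol (nu i.castSucc)
          (by rw [mem_Icc]; have := hr i.castSucc; omega)
        have h1 : i.castSucc < i' := by
          by_contra h2
          have := ha i' i.castSucc (not_lt.1 h2)
          omega
        have := hanti i.succ i' (Fin.castSucc_lt_iff_succ_le.1 h1)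
        omega
      have hms' : ∀ i, 1 ≤ mu i ∧ mu i ≤ k + 1 := by
        intro i
        refine Fin.cases ?_ (fun i => ?_) i
        · omega
        · rw [hms]; have := hr i.castSucc; omega
      refine ⟨⟨⟨fun i => by have := hms' i; omega, ?_, ?_, ?_⟩, by omega⟩,
        by have := hms' (Fin.last n); omega⟩
      · intro i j
        refine Fin.cases ?_ (fun i => ?_) i
        · intro _; have := hms' j; omega
        · refine Fin.cases ?_ (fun j => ?_) j
          · intro h
            exact absurd (lt_of_lt_of_le (Fin.succ_pos i) h) (lt_irrefl _)
          · intro h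
            rw [hms, hms]
            have := ha i.castSucc j.castSucc
              (Fin.castSucc_le_castSucc_iff.2 (Fin.succ_le_succ_iff.1 h))
            omega
      · intro i
        refine Fin.cases ?_ (fun i => ?_) i
        · omega
        · rw [hms]
          have := hnl i
          have := hrim i.castSucc i.succ (by simp)
          omega
      · rw [Fin.sum_univ_succ, hm0]
        simp only [hms]
        rw [Fin.sum_univ_castSucc, hlast] at hsum
        rw [sum_add_distrib]
        simp only [sum_const, card_univ, Fintype.card_fin, smul_eq_mul, mul_one]
        omega
    · intro mu hmu
      simp only [mem_filter, Fintype.mem_piFinset, mem_range] at hmu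
      obtain ⟨⟨⟨hr, ha, hs, hsum⟩, hk0⟩, hl⟩ := hmu
      funext i
      refine Fin.cases ?_ (fun i => ?_) i
      · have := hr 0
        simp only [Fin.cons_zero]; omega
      · have := ha i.succ (Fin.last n) (Fin.le_last _)
        simp only [Fin.cons_succ, Fin.snoc_castSucc]; omega
    · intro nu hnu
      simp only [mem_filter, Fintype.mem_piFinset, mem_range] at hnu
      obtain ⟨hr, hl0, ha, hle, hsum, hrim, hcol⟩ := hnu
      have hlast : nu (Fin.last n) = 0 := by
        by_contra h
        obtain ⟨i, hi1, hi2⟩ := hcol (nu (Fin.last n))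
          (by rw [mem_Icc]; have := hr (Fin.last n); omega)
        have := ha i (Fin.last n) (Fin.le_last i)
        omega
      funext i
      refine Fin.lastCases ?_ (fun i => ?_) i
      · simp [hlast]
      · simp
    · intro mu hmu
      simp only [mem_filter, Fintype.mem_piFinset, mem_range] at hmu
      obtain ⟨⟨⟨hr, ha, hs, hsum⟩, hk0⟩, hl⟩ := hmu
      have hmu0 : mu 0 = k + 1 := by have := hr 0; omega
      rw [hom_first_row n k φ x hz ht mu hmu0, sigmaL_snoc_zero _ _ _ (by simp)]
      congr 2
      unfold sigmaL
      congr 1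
      ext1 i j
      simp only [Matrix.of_apply, Fin.snoc_castSucc]
      have := ha i.succ (Fin.last n) (Fin.le_last _)
      congr 1
      omega

end Helpers

open scoped Classical in
/-- The quantum Pieri formula in `QH_α`: for `1 ≤ p ≤ m` and `λ ⊆ m × k`,
`c_p σ_λ = ∑_μ σ_μ + ∑_ν α q σ_ν`, where `μ` runs over partitions in `m × k`
obtained by adding a vertical strip of `p` boxes to `λ`, and `ν` runs over
partitions obtained by removing `n - p` boxes from the outer rim of `λ`
(at least one from each column), this second sum being empty unless `λ_1 = k`. -/
theorem quantum_pieri (m k : ℕ) (hm : 0 < m) (hk : 0 < k) (α : ℚ)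
    (p : ℕ) (hp1 : 1 ≤ p) (hpm : p ≤ m) (lam : Fin m → ℕ)
    (hanti : ∀ i j : Fin m, i ≤ j → lam j ≤ lam i) (hbound : ∀ i, lam i ≤ k) :
    Ideal.Quotient.mk (qhIdeal m k α)
        (Polynomial.C (cVar m (p : ℤ) * sigmaL m lam)) =
      (∑ mu ∈ (Fintype.piFinset fun _ : Fin m => Finset.range (k + 1)) |>.filter
          (fun mu : Fin m → ℕ =>
            (∀ i j : Fin m, i ≤ j → mu j ≤ mu i) ∧
            (∀ i, lam i ≤ mu i ∧ mu i ≤ lam i + 1) ∧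
            (∑ i, mu i) = (∑ i, lam i) + p),
          Ideal.Quotient.mk (qhIdeal m k α) (Polynomial.C (sigmaL m mu))) +
      ∑ nu ∈ (Fintype.piFinset fun _ : Fin m => Finset.range (k + 1)) |>.filter
          (fun nu : Fin m → ℕ =>
            lam ⟨0, hm⟩ = k ∧
            (∀ i j : Fin m, i ≤ j → nu j ≤ nu i) ∧
            (∀ i, nu i ≤ lam i) ∧
            (∑ i, nu i) + (m + k - p) = (∑ i, lam i) ∧
            (∀ i j : Fin m, (j : ℕ) = (i : ℕ) + 1 → lam j ≤ nu i + 1) ∧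
            (∀ j ∈ Finset.Icc 1 k, ∃ i, nu i < j ∧ j ≤ lam i)),
        Ideal.Quotient.mk (qhIdeal m k α)
          (Polynomial.C (MvPolynomial.C α) * Polynomial.X * Polynomial.C (sigmaL m nu)) := by
  obtain ⟨n, rfl⟩ : ∃ n, m = n + 1 := ⟨m - 1, by omega⟩
  have h := pieri_hom n k p hk
    ((Ideal.Quotient.mk (qhIdeal (n + 1) k α)).comp Polynomial.C)
    (Ideal.Quotient.mk (qhIdeal (n + 1) k α)
      (Polynomial.C (MvPolynomial.C α) * Polynomial.X))
    (fun r h1 h2 => quot_zero (n + 1) k α r h1 (by push_cast; omega))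
    (by
      have := quot_top (n + 1) k α
      push_cast at this
      rw [RingHom.comp_apply, this, pow_succ]
      ring)
    hp1 hpm lam hanti hbound
  simp only [RingHom.comp_apply, ← map_mul (Ideal.Quotient.mk (qhIdeal (n + 1) k α))] at h
  exact h
end

section
/- The ring QH_α = S[q]/⟨σ_{k+1},...,σ_{n-1}, σ_n + (-1)^m α q⟩ is a free ℚ[q]-module with basis {σ_λ : λ ⊆ m×k}. -/
namespace QHB

lemma cVar_zero (m : ℕ) : cVar m 0 = 1 := by simp [cVar]
lemma cVar_neg (m : ℕ) {i : ℤ} (h : i < 0) : cVar m i = 0 := by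
  unfold cVar; rw [dif_neg (by omega), if_neg (by omega)]
lemma cVar_gt (m : ℕ) {i : ℤ} (h : (m : ℤ) < i) : cVar m i = 0 := by
  unfold cVar; rw [dif_neg (by omega), if_neg (by omega)]

lemma sigmaP_neg (m : ℕ) {i : ℤ} (h : i < 0) : sigmaP m i = 0 := by
  unfold sigmaP; rw [if_pos h]

lemma sigmaP_nat (m p : ℕ) : sigmaP m p =
    Matrix.det (Matrix.of fun i j : Fin p => cVar m (1 + (j : ℤ) - (i : ℤ))) := by
  unfold sigmaP; rw [if_neg (by omega)]
  rfl

/-- The generating series of the `c_i`. -/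
noncomputable def cSer (m : ℕ) : PowerSeries (MvPolynomial (Fin m) ℚ) :=
  PowerSeries.mk fun r => cVar m r

/-- The inverse of the generating series. -/
noncomputable def bSer (m : ℕ) : PowerSeries (MvPolynomial (Fin m) ℚ) :=
  PowerSeries.invOfUnit (cSer m) 1

lemma c_mul_b (m : ℕ) : cSer m * bSer m = 1 := by
  apply PowerSeries.mul_invOfUnit
  simp [cSer, cVar_zero]

lemma sum_cb (m p : ℕ) : ∑ r ∈ Finset.range (p + 1), cVar m r * PowerSeries.coeff (p - r) (bSer m)
    = if p = 0 then 1 else 0 := by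
  have h := congrArg (PowerSeries.coeff p) (c_mul_b m)
  rw [PowerSeries.coeff_mul, Finset.Nat.sum_antidiagonal_eq_sum_range_succ_mk,
    PowerSeries.coeff_one] at h
  rw [← h]
  simp [cSer]

lemma sigmaP_eq (m p : ℕ) : sigmaP m p = (-1) ^ p * PowerSeries.coeff p (bSer m) := by
  set A : Matrix (Fin (p + 1)) (Fin (p + 1)) (MvPolynomial (Fin m) ℚ) :=
    Matrix.of fun i j => cVar m ((j : ℤ) - (i : ℤ)) with hA
  set v : Fin (p + 1) → MvPolynomial (Fin m) ℚ :=
    fun j => PowerSeries.coeff (p - (j : ℕ)) (bSer m) with hv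
  have hdet : A.det = 1 := by
    rw [Matrix.det_of_isUpperTriangular]
    · simp [hA, cVar_zero]
    · intro i j hij
      simp only [id] at hij
      simp only [hA, Matrix.of_apply]
      apply cVar_neg
      have : (j : ℕ) < i := hij
      omega
  have hAv : A.mulVec v = Pi.single (Fin.last p) 1 := by
    funext i
    have hi : (i : ℕ) ≤ p := by omega
    have h1 := sum_cb m (p - i)
    change ∑ j : Fin (p + 1), cVar m ((j : ℤ) - (i : ℤ)) *
      PowerSeries.coeff (p - (j : ℕ)) (bSer m) = _
    rw [Fin.sum_univ_eq_sum_range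
      (fun j => cVar m ((j : ℤ) - (i : ℤ)) * PowerSeries.coeff (p - j) (bSer m)) (p + 1)]
    obtain ⟨d, hd⟩ := Nat.exists_eq_add_of_le (show (i : ℕ) ≤ p + 1 by omega)
    have e : d = p - i + 1 := by omega
    rw [show Finset.range (p + 1) = Finset.range ((i : ℕ) + d) from congrArg _ hd, e, Finset.sum_range_add, Finset.sum_eq_zero, zero_add]
    · rw [show (Pi.single (Fin.last p) 1 : Fin (p + 1) → MvPolynomial (Fin m) ℚ) i =
          if p - (i : ℕ) = 0 then 1 else 0 by
        rw [Pi.single_apply]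
        congr 1
        rw [Fin.ext_iff, Fin.val_last]
        apply propext; omega]
      rw [← h1]
      refine Finset.sum_congr rfl fun r hr => ?_
      rw [Nat.sub_sub]
      congr 2
      push_cast; ring
    · intro r hr
      rw [Finset.mem_range] at hr
      rw [cVar_neg _ (by omega), zero_mul]
  have h2 : v = A.adjugate.mulVec (Pi.single (Fin.last p) 1) := by
    rw [← hAv, Matrix.mulVec_mulVec, Matrix.adjugate_mul, hdet, one_smul, Matrix.one_mulVec]
  have h3 := congrFun h2 0
  rw [Matrix.mulVec_single_one] at h3
  simp only [Matrix.col_apply] at h3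
  rw [Matrix.adjugate_fin_succ_eq_det_submatrix] at h3
  have h4 : PowerSeries.coeff p (bSer m) = (-1) ^ p * sigmaP m p := by
    rw [sigmaP_nat]
    simp only [hv, Fin.val_zero, Nat.sub_zero, Fin.val_last, add_zero] at h3
    rw [h3]
    congr 2
    ext1 i j
    simp only [hA, Matrix.submatrix_apply, Matrix.of_apply, Fin.succAbove_last, Fin.succAbove_zero,
      Fin.val_succ, Fin.val_castSucc]
    congr 1
    push_cast; ring
  rw [h4, ← mul_assoc, ← mul_pow]; simp

lemma sigmaP_zero (m : ℕ) : sigmaP m 0 = 1 := by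
  have := sigmaP_nat m 0
  simpa using this

lemma sigma_rec (m : ℕ) (p : ℤ) (hp : 1 ≤ p) :
    ∑ r ∈ Finset.range (m + 1), (-1) ^ r * cVar m r * sigmaP m (p - r) = 0 := by
  obtain ⟨q, rfl⟩ : ∃ q : ℕ, p = q := ⟨p.toNat, by omega⟩
  have key : ∀ N, m ≤ N → q ≤ N →
      ∑ r ∈ Finset.range (m + 1), (-1) ^ r * cVar m r * sigmaP m (q - r) =
      ∑ r ∈ Finset.range (q + 1), (-1) ^ r * cVar m r * sigmaP m (q - r) := by
    intro N h1 h2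
    trans ∑ r ∈ Finset.range (N + 1), (-1) ^ r * cVar m r * sigmaP m (q - r)
    · apply Finset.sum_subset
      · intro x; simp; omega
      · intro x _ hx
        rw [cVar_gt m (by simp at hx; omega)]; simp
    · symm
      apply Finset.sum_subset
      · intro x; simp; omega
      · intro x _ hx
        rw [sigmaP_neg m (by simp at hx; omega)]; simp
  rw [key (max m q) (le_max_left _ _) (le_max_right _ _)]
  have h := sum_cb m q
  rw [if_neg (by omega)] at h
  rw [← mul_zero ((-1) ^ q), ← h, Finset.mul_sum]
  refine Finset.sum_congr rfl fun r hr => ?_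
  have hr' : r ≤ q := by simp at hr; omega
  rw [← Nat.cast_sub hr', sigmaP_eq]
  obtain ⟨d, rfl⟩ := Nat.exists_eq_add_of_le hr'
  simp only [Nat.add_sub_cancel_left]
  ring

/-- The determinants `E(b) = det(σ_{b_i + j - (m-1)})`. -/
noncomputable def E (m : ℕ) (b : Fin m → ℕ) : MvPolynomial (Fin m) ℚ :=
  Matrix.det (Matrix.of fun i j : Fin m => sigmaP m ((b i : ℤ) + (j : ℤ) - ((m : ℤ) - 1)))

/-- Shift of a partition by the staircase. -/
def bet {m : ℕ} (lam : Fin m → ℕ) : Fin m → ℕ := fun i => lam i + (m - 1 - (i : ℕ))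

lemma sigmaL_eq (m : ℕ) (lam : Fin m → ℕ) : sigmaL m lam = E m (bet lam) := by
  unfold sigmaL E bet
  congr 2
  funext i j
  congr 1
  omega

lemma rec_unique {m : ℕ} {T : Type*} [CommRing T] (c : ℕ → T) (hc : c 0 = 1) (v : ℕ → T)
    (hv : ∀ b, ∑ r ∈ Finset.range (m + 1), (-1) ^ r * c r * v (b + m - r) = 0)
    (h0 : ∀ b < m, v b = 0) (b : ℕ) : v b = 0 := by
  induction b using Nat.strong_induction_on with
  | _ b ih =>
    by_cases hb : b < m
    · exact h0 b hb
    · have h := hv (b - m)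
      rw [Finset.sum_range_succ', Finset.sum_eq_zero] at h
      · simpa [hc, Nat.sub_add_cancel (not_lt.mp hb)] using h
      · intro r hr
        rw [ih _ (by simp at hr; omega), mul_zero]

lemma sigma_rec_shift {m : ℕ} (b : ℕ) (t : ℤ) (ht : 0 ≤ t) :
    ∑ r ∈ Finset.range (m + 1), (-1) ^ r * cVar m r *
      sigmaP m (((b + m - r : ℕ) : ℤ) + t - ((m : ℤ) - 1)) = 0 := by
  rw [← sigma_rec m (b + 1 + t) (by omega)]
  refine Finset.sum_congr rfl fun r hr => ?_
  congr 2
  simp at hr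
  omega

lemma exists_w {m : ℕ} {T : Type*} [CommRing T] (ψ : MvPolynomial (Fin m) ℚ →+* T) (u : ℕ → T)
    (hu : ∀ b, ∑ r ∈ Finset.range (m + 1), (-1) ^ r * ψ (cVar m r) * u (b + m - r) = 0) :
    ∃ w : Fin m → T, ∀ b, u b =
      ∑ j : Fin m, ψ (sigmaP m ((b : ℤ) + (j : ℤ) - ((m : ℤ) - 1))) * w j := by
  set G : Matrix (Fin m) (Fin m) T :=
    Matrix.of fun i j => ψ (sigmaP m ((i : ℤ) - (j : ℤ))) with hG
  have hdet : G.det = 1 := by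
    rw [Matrix.det_of_isLowerTriangular]
    · simp [hG, sigmaP_zero]
    · intro i j hij
      simp only [hG, Matrix.of_apply]
      rw [sigmaP_neg, map_zero]
      have : (i : ℕ) < j := hij
      omega
  set w' : Fin m → T := G.adjugate.mulVec (fun i => u i) with hw'
  have h1 : G.mulVec w' = fun i : Fin m => u i := by
    rw [hw', Matrix.mulVec_mulVec, Matrix.mul_adjugate, hdet, one_smul, Matrix.one_mulVec]
  refine ⟨fun j => w' j.rev, fun b => ?_⟩
  rw [← sub_eq_zero]
  refine rec_unique (m := m) (fun r => ψ (cVar m r)) (by simp [cVar_zero])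
    (fun b => u b - ∑ j : Fin m, ψ (sigmaP m ((b : ℤ) + (j : ℤ) - ((m : ℤ) - 1))) * w' j.rev)
    (fun b => ?_) (fun b hb => ?_) b
  · simp only [mul_sub, Finset.sum_sub_distrib, hu, zero_sub, neg_eq_zero]
    simp only [Finset.mul_sum]
    rw [Finset.sum_comm]
    apply Finset.sum_eq_zero
    intro j _
    have := congrArg (fun z => ψ z * w' j.rev) (sigma_rec_shift (m := m) b (j : ℤ) (by omega))
    simp only [map_sum, map_zero, zero_mul, Finset.sum_mul, map_mul, map_pow, map_neg,
      map_one] at this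
    rw [← this]
    refine Finset.sum_congr rfl fun r _ => by ring
  · rw [sub_eq_zero]
    have := congrFun h1 ⟨b, hb⟩
    simp only at this
    rw [← this, Matrix.mulVec, dotProduct]
    symm
    refine Fintype.sum_equiv Fin.revPerm _ _ fun j => ?_
    simp only [hG, Matrix.of_apply, Fin.revPerm_apply, Fin.val_rev]
    congr 3
    omega

/-- bialternant -/
noncomputable def alt {m : ℕ} {T : Type*} [CommRing T] (x : Fin m → T) (b : Fin m → ℕ) : T :=
  Matrix.det (Matrix.of fun i l : Fin m => x l ^ b i)

lemma exists_W {m : ℕ} {T : Type*} [CommRing T] (ψ : MvPolynomial (Fin m) ℚ →+* T)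
    (x : Fin m → T)
    (hx : ∀ l, ∑ r ∈ Finset.range (m + 1), (-1) ^ r * ψ (cVar m r) * x l ^ (m - r) = 0) :
    ∃ W : T, ∀ b : Fin m → ℕ, alt x b = ψ (E m b) * W := by
  have h : ∀ l, ∃ w : Fin m → T, ∀ b : ℕ, x l ^ b =
      ∑ j : Fin m, ψ (sigmaP m ((b : ℤ) + (j : ℤ) - ((m : ℤ) - 1))) * w j := by
    intro l
    apply exists_w ψ (fun b => x l ^ b)
    intro b
    rw [← mul_zero (x l ^ b), ← hx l, Finset.mul_sum]
    refine Finset.sum_congr rfl fun r hr => ?_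
    simp at hr
    rw [Nat.add_sub_assoc (by omega), pow_add]
    ring
  choose w hw using h
  refine ⟨Matrix.det (Matrix.of fun j l => w l j), fun b => ?_⟩
  rw [E, RingHom.map_det, ← Matrix.det_mul, alt]
  congr 1
  ext i l
  simp [Matrix.mul_apply, hw]

lemma esymm_mul_alt {m : ℕ} {T : Type*} [CommRing T] (x : Fin m → T) (b : Fin m → ℕ) (r : ℕ) :
    (∑ t ∈ Finset.powersetCard r (Finset.univ : Finset (Fin m)), ∏ i ∈ t, x i) * alt x b =
    ∑ t ∈ Finset.powersetCard r (Finset.univ : Finset (Fin m)),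
      alt x (fun i => b i + if i ∈ t then 1 else 0) := by
  simp only [alt, Matrix.det_apply', Matrix.of_apply]
  rw [Finset.sum_comm, Finset.mul_sum]
  refine Finset.sum_congr rfl fun σ _ => ?_
  rw [← Finset.mul_sum, mul_left_comm]
  congr 1
  have h1 : Finset.powersetCard r (Finset.univ : Finset (Fin m)) =
      (Finset.powersetCard r (Finset.univ : Finset (Fin m))).map
        (Finset.mapEmbedding σ.toEmbedding).toEmbedding := by
    rw [← Finset.powersetCard_map, Finset.map_univ_equiv]
  conv_rhs => rw [h1, Finset.sum_map]
  rw [Finset.sum_mul]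
  refine Finset.sum_congr rfl fun t _ => ?_
  simp only [pow_add, Finset.prod_mul_distrib]
  rw [mul_comm]
  congr 1
  simp [pow_ite]

open MvPolynomial in
/-- The map `c_i ↦ e_i(x)`. -/
noncomputable def psi (m : ℕ) (K : Type*) [CommRing K] [Algebra ℚ K] :
    MvPolynomial (Fin m) ℚ →+* MvPolynomial (Fin m) K :=
  (aeval (fun i : Fin m => esymm (Fin m) K ((i : ℕ) + 1)) :
    MvPolynomial (Fin m) ℚ →ₐ[ℚ] MvPolynomial (Fin m) K).toRingHom

open MvPolynomial in
lemma psi_cVar (m : ℕ) (K : Type*) [CommRing K] [Algebra ℚ K] (r : ℕ) (hr : r ≤ m) :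
    psi m K (cVar m r) = esymm (Fin m) K r := by
  rcases Nat.eq_zero_or_pos r with rfl | h
  · simp [cVar_zero]
  · unfold cVar
    rw [dif_pos (by omega)]
    simp only [psi, AlgHom.toRingHom_eq_coe, RingHom.coe_coe, aeval_X]
    congr 1
    omega

open MvPolynomial in
lemma psi_rec (m : ℕ) (K : Type*) [CommRing K] [Algebra ℚ K] (l : Fin m) :
    ∑ r ∈ Finset.range (m + 1), (-1) ^ r * psi m K (cVar m r) *
      (X l : MvPolynomial (Fin m) K) ^ (m - r) = 0 := by
  have h := Multiset.prod_X_sub_X_eq_sum_esymm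
    ((Finset.univ : Finset (Fin m)).val.map (X : Fin m → MvPolynomial (Fin m) K))
  have h2 := congrArg (Polynomial.eval (X l)) h
  rw [Polynomial.eval_multiset_prod, Multiset.prod_eq_zero] at h2
  · rw [h2, Polynomial.eval_finsetSum]
    simp only [Multiset.card_map, Finset.card_val, Finset.card_univ, Fintype.card_fin]
    refine Finset.sum_congr rfl fun r hr => ?_
    rw [psi_cVar _ _ _ (by simp at hr; omega), esymm_eq_multiset_esymm]
    simp [mul_assoc]
  · simp only [Multiset.map_map, Multiset.mem_map]
    exact ⟨l, by simp, by simp⟩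

lemma psi_injective (m : ℕ) : Function.Injective (psi m ℚ) := by
  intro a b h
  apply MvPolynomial.esymmAlgHom_fin_injective (n := m) (m := m) (R := ℚ) le_rfl
  apply Subtype.ext
  rw [MvPolynomial.esymmAlgHom_apply, MvPolynomial.esymmAlgHom_apply]
  exact h

lemma exists_psiW (m : ℕ) (K : Type*) [CommRing K] [IsDomain K] [Algebra ℚ K] :
    ∃ W : MvPolynomial (Fin m) K, W ≠ 0 ∧
      ∀ b : Fin m → ℕ, alt MvPolynomial.X b = psi m K (E m b) * W := by
  obtain ⟨W, hW⟩ := exists_W (psi m K) MvPolynomial.X (psi_rec m K)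
  refine ⟨W, ?_, hW⟩
  rintro rfl
  have h := hW (fun i => i)
  rw [mul_zero, alt, ← Matrix.det_transpose] at h
  exact Matrix.det_vandermonde_ne_zero_iff.mpr
    (MvPolynomial.X_injective (σ := Fin m) (R := K)) h

lemma pieri (m r : ℕ) (hr : r ≤ m) (b : Fin m → ℕ) :
    cVar m r * E m b = ∑ t ∈ Finset.powersetCard r (Finset.univ : Finset (Fin m)),
      E m (fun i => b i + if i ∈ t then 1 else 0) := by
  obtain ⟨W, hW0, hW⟩ := exists_psiW m ℚ
  apply psi_injective
  apply mul_right_cancel₀ hW0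
  rw [map_mul, map_sum, Finset.sum_mul, mul_assoc, ← hW, psi_cVar _ _ _ hr, MvPolynomial.esymm,
    esymm_mul_alt]
  exact Finset.sum_congr rfl fun t _ => hW _

lemma det_tri {m : ℕ} (lam : Fin m → ℕ) (hlam : ∀ i : Fin m, (i : ℕ) ≠ 0 → lam i = 0) :
    sigmaL m lam = ∏ i, sigmaP m (lam i) := by
  unfold sigmaL
  rw [Matrix.det_of_isUpperTriangular]
  · refine Finset.prod_congr rfl fun i _ => ?_
    simp
  · intro i j hij
    have : (j : ℕ) < i := hij
    rw [Matrix.of_apply]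
    apply sigmaP_neg
    rw [hlam i (by omega)]
    omega

lemma E_perm {m : ℕ} (b : Fin m → ℕ) (π : Equiv.Perm (Fin m)) :
    E m (b ∘ π) = (Equiv.Perm.sign π : MvPolynomial (Fin m) ℚ) * E m b := by
  unfold E
  rw [← Matrix.det_permute]
  rfl

/-- The partitions inside the rectangle. -/
noncomputable def parts (m k : ℕ) : Finset (Fin m → ℕ) := open scoped Classical in
  (Fintype.piFinset fun _ : Fin m => Finset.range (k + 1)) |>.filter
          (fun lam : Fin m → ℕ => ∀ i j : Fin m, i ≤ j → lam j ≤ lam i)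

lemma mem_parts {m k : ℕ} (lam : Fin m → ℕ) : lam ∈ parts m k ↔
    (∀ i, lam i ≤ k) ∧ ∀ i j : Fin m, i ≤ j → lam j ≤ lam i := by
  unfold parts
  rw [Finset.mem_filter, Fintype.mem_piFinset]
  simp

lemma bet_anti {m k : ℕ} {lam : Fin m → ℕ} (h : lam ∈ parts m k) :
    StrictAnti (bet lam) ∧ ∀ i, bet lam i < m + k := by
  rw [mem_parts] at h
  constructor
  · intro i j hij
    have h1 := h.2 i j hij.le
    have h2 : (i : ℕ) < j := hij
    simp only [bet]
    omega
  · intro i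
    have := h.1 i
    simp only [bet]
    omega

lemma exists_lam {m k : ℕ} (b : Fin m → ℕ) (hb : StrictAnti b) (hlt : ∀ i, b i < m + k) :
    ∃ lam ∈ parts m k, bet lam = b := by
  have hstep : ∀ d : ℕ, ∀ i j : Fin m, (j : ℕ) = i + d → b j + d ≤ b i := by
    intro d
    induction d with
    | zero => intro i j h; have : i = j := Fin.ext (by omega); simp [this]
    | succ d ih =>
      intro i j h
      have h1 := ih i ⟨i + d, by omega⟩ rfl
      have h2 : b j < b ⟨i + d, by omega⟩ := hb (by rw [Fin.lt_def]; simp only; omega)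
      omega
  have hge : ∀ i : Fin m, m - 1 - (i : ℕ) ≤ b i := by
    intro i
    have := hstep (m - 1 - i) i ⟨m - 1, by have := i.pos; omega⟩ (by simp only; omega)
    omega
  refine ⟨fun i => b i - (m - 1 - i), (mem_parts _).mpr ⟨fun i => ?_, fun i j hij => ?_⟩, ?_⟩
  · have := hstep i ⟨0, i.pos⟩ i (by simp)
    have := hlt ⟨0, i.pos⟩
    omega
  · have hij' : (i : ℕ) ≤ j := hij
    have := hstep (j - i) i j (by omega)
    omega
  · funext i
    have := hge i
    simp only [bet]
    omega

lemma det_scale {m : ℕ} {A : Type*} [CommRing A] (M M' : Matrix (Fin m) (Fin m) A) (i : Fin m)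
    (s : A) (h : ∀ j, j ≠ i → M j = M' j) (hi : M i = s • M' i) : M.det = s * M'.det := by
  have h1 : M = M'.updateRow i (s • M' i) := by
    funext j
    by_cases hj : j = i
    · subst hj; simp [hi]
    · rw [Matrix.updateRow_ne hj, h j hj]
  rw [h1, Matrix.det_updateRow_smul, Matrix.updateRow_eq_self]

section Q
variable {m k : ℕ} {A : Type*} [CommRing A] (f : MvPolynomial (Fin m) ℚ →+* A) (a : A)

lemma periodic (hm : 0 < m)
    (hz : ∀ p : ℤ, (k : ℤ) + 1 ≤ p → p ≤ m + k - 1 → f (sigmaP m p) = 0)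
    (hn : f (sigmaP m ((m : ℤ) + k)) + a = 0) (b : ℕ) (j : ℕ) :
    f (sigmaP m ((b + (m + k) : ℕ) + (j : ℤ) - ((m : ℤ) - 1))) =
      - a * f (sigmaP m ((b : ℤ) + (j : ℤ) - ((m : ℤ) - 1))) := by
  have key : ∀ b : ℕ, f (sigmaP m (((b : ℤ) + (m + k) - ((m : ℤ) - 1)))) +
      a * f (sigmaP m ((b : ℤ) - ((m : ℤ) - 1))) = 0 := by
    refine rec_unique (m := m) (fun r => f (cVar m r)) (by simp [cVar_zero]) _
      (fun b => ?_) (fun b hb => ?_)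
    · simp only [mul_add, Finset.sum_add_distrib]
      have h1 := congrArg f (sigma_rec_shift (m := m) b (m + k) (by omega))
      have h2 := congrArg (fun z => a * f z)
        (sigma_rec_shift (m := m) b 0 le_rfl)
      simp only [map_sum, map_zero, mul_zero, Finset.mul_sum, map_mul, map_pow, map_neg,
        map_one, add_zero] at h1 h2
      rw [h1, zero_add, ← h2]
      refine Finset.sum_congr rfl fun r _ => by ring
    · by_cases h : b = m - 1
      · rw [show ((b : ℤ) + (m + k) - ((m : ℤ) - 1)) = m + k by omega,
          show (b : ℤ) - ((m : ℤ) - 1) = 0 by omega, sigmaP_zero, map_one, mul_one]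
        exact hn
      · rw [hz _ (by omega) (by omega), sigmaP_neg m (by omega)]
        simp
  have := key (b + j)
  rw [neg_mul, ← add_eq_zero_iff_eq_neg, ← this]
  push_cast
  congr 3
  congr 1; ring

lemma E_mem (hm : 0 < m)
    (hz : ∀ p : ℤ, (k : ℤ) + 1 ≤ p → p ≤ m + k - 1 → f (sigmaP m p) = 0)
    (hn : f (sigmaP m ((m : ℤ) + k)) + a = 0) (N : AddSubgroup A)
    (hN : ∀ lam ∈ parts m k, f (sigmaL m lam) ∈ N)
    (ha : ∀ y ∈ N, a * y ∈ N) (b : Fin m → ℕ) : f (E m b) ∈ N := by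
  induction hs : ∑ i, b i using Nat.strong_induction_on generalizing b with
  | _ s ih =>
    subst hs
    by_cases h : ∃ i, m + k ≤ b i
    · obtain ⟨i, hi⟩ := h
      have h1 : f (E m b) = - a * f (E m (Function.update b i (b i - (m + k)))) := by
        unfold E
        rw [RingHom.map_det, RingHom.map_det]
        apply det_scale _ _ i
        · intro j hj
          funext l
          simp [hj]
        · funext l
          have := periodic f a hm hz hn (b i - (m + k)) l
          rw [Nat.sub_add_cancel hi] at this
          simp only [RingHom.mapMatrix_apply, Matrix.map_apply, Matrix.of_apply, Pi.smul_apply,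
            Function.update_self, smul_eq_mul]
          exact this
      rw [h1, neg_mul]
      apply N.neg_mem
      apply ha
      refine ih _ ?_ _ rfl
      apply Finset.sum_lt_sum
      · intro j _
        by_cases hj : j = i
        · subst hj; simp
        · simp [hj]
      · exact ⟨i, Finset.mem_univ _, by simp; omega⟩
    · push Not at h
      by_cases hinj : Function.Injective b
      · set π : Equiv.Perm (Fin m) := Fin.revPerm.trans (Tuple.sort b) with hπ
        have hmono : StrictMono (b ∘ Tuple.sort b) :=
          (Tuple.monotone_sort b).strictMono_of_injective (hinj.comp (Equiv.injective _))
        have hanti : StrictAnti (b ∘ π) := by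
          intro i j hij
          exact hmono (Fin.rev_lt_rev.mpr hij)
        obtain ⟨lam, hl, hb⟩ := exists_lam (k := k) (b ∘ π) hanti (fun i => h _)
        have h1 := hN lam hl
        rw [sigmaL_eq, hb, E_perm, map_mul] at h1
        rcases Int.units_eq_one_or (Equiv.Perm.sign π) with h2 | h2
        · simpa [h2] using h1
        · simpa [h2] using h1
      · have : E m b = 0 := by
          rw [Function.Injective] at hinj
          push Not at hinj
          obtain ⟨i, j, hij, hne⟩ := hinj
          unfold E
          apply Matrix.det_zero_of_row_eq hne
          funext l
          simp [hij]
        rw [this, map_zero]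
        exact N.zero_mem

end Q

section span
variable {m k : ℕ} {A : Type*} [CommRing A] (g : Polynomial (MvPolynomial (Fin m) ℚ) →+* A)

lemma spanning (hm : 0 < m) (a : Polynomial ℚ)
    (hz : ∀ p : ℤ, (k : ℤ) + 1 ≤ p → p ≤ m + k - 1 → g (Polynomial.C (sigmaP m p)) = 0)
    (hn : g (Polynomial.C (sigmaP m ((m : ℤ) + k))) +
      g (Polynomial.mapRingHom MvPolynomial.C a) = 0) (y : Polynomial (MvPolynomial (Fin m) ℚ)) :
    ∃ f : (Fin m → ℕ) → Polynomial ℚ, g y = ∑ lam ∈ parts m k,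
      g (Polynomial.mapRingHom MvPolynomial.C (f lam)) * g (Polynomial.C (sigmaL m lam)) := by
  let _ : Algebra (Polynomial ℚ) A := (g.comp (Polynomial.mapRingHom MvPolynomial.C)).toAlgebra
  have hsmul : ∀ (p : Polynomial ℚ) (z : A), p • z =
    g (Polynomial.mapRingHom MvPolynomial.C p) * z := fun p z => rfl
  set N : Submodule (Polynomial ℚ) A := Submodule.span (Polynomial ℚ)
    ((fun lam => g (Polynomial.C (sigmaL m lam))) '' (parts m k : Set (Fin m → ℕ))) with hN
  suffices h : g y ∈ N by
    rw [hN, Submodule.mem_span_image_finset_iff_exists_fun'] at h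
    obtain ⟨c, hc⟩ := h
    exact ⟨c, hc.symm⟩
  have hlamN : ∀ lam ∈ parts m k, g (Polynomial.C (sigmaL m lam)) ∈ N := fun lam hl =>
    Submodule.subset_span ⟨lam, hl, rfl⟩
  have hE : ∀ b, g (Polynomial.C (E m b)) ∈ N := fun b =>
    E_mem (g.comp Polynomial.C) (g (Polynomial.mapRingHom MvPolynomial.C a)) hm hz hn
      N.toAddSubgroup hlamN (fun z hzN => N.smul_mem a hzN) b
  have hX : ∀ (i : Fin m), ∀ z ∈ N, g (Polynomial.C (MvPolynomial.X i)) * z ∈ N := by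
    intro i z hzN
    induction hzN using Submodule.span_induction with
    | mem z h =>
      obtain ⟨lam, hl, rfl⟩ := h
      simp only
      rw [← map_mul, ← map_mul, sigmaL_eq]
      have h1 := pieri m (i + 1) (by omega) (bet lam)
      rw [show cVar m ((i : ℕ) + 1 : ℕ) = MvPolynomial.X i by
        unfold cVar; rw [dif_pos (by omega)]; congr 1; ext; simp] at h1
      rw [h1, map_sum, map_sum]
      exact N.sum_mem fun t _ => hE _
    | zero => simp
    | add x y _ _ hx hy => rw [mul_add]; exact N.add_mem hx hy
    | smul p x _ hx =>
      rw [mul_smul_comm]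
      exact N.smul_mem _ hx
  have hone : (1 : A) ∈ N := by
    have h0 : (fun _ => 0 : Fin m → ℕ) ∈ parts m k := by rw [mem_parts]; simp
    have h1 := hlamN _ h0
    rw [det_tri _ (by simp)] at h1
    simpa [sigmaP_zero] using h1
  have hS : ∀ s : MvPolynomial (Fin m) ℚ, ∀ z ∈ N, g (Polynomial.C s) * z ∈ N := by
    intro s
    induction s using MvPolynomial.induction_on with
    | C r =>
      intro z h
      have := N.smul_mem (Polynomial.C r) h
      rw [hsmul] at this
      simpa using this
    | add p q hp hq =>
      intro z h
      rw [map_add, map_add, add_mul]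
      exact N.add_mem (hp z h) (hq z h)
    | mul_X p i hp =>
      intro z h
      rw [map_mul, map_mul, mul_assoc]
      exact hp _ (hX i z h)
  have hall : ∀ y : Polynomial (MvPolynomial (Fin m) ℚ), ∀ z ∈ N, g y * z ∈ N := by
    intro y
    induction y using Polynomial.induction_on' with
    | add p q hp hq =>
      intro z h
      rw [map_add, add_mul]
      exact N.add_mem (hp z h) (hq z h)
    | monomial n s =>
      intro z h
      rw [← Polynomial.C_mul_X_pow_eq_monomial, map_mul, mul_assoc]
      apply hS
      have := N.smul_mem (Polynomial.X ^ n) h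
      rw [hsmul] at this
      simpa using this
  simpa using hall y 1 hone

end span
section indep

open MvPolynomial

/-- the partition with one part -/
def row (m p : ℕ) : Fin m → ℕ := fun i => if (i : ℕ) = 0 then p else 0

lemma sigmaL_row {m : ℕ} (hm : 0 < m) (p : ℕ) : sigmaL m (row m p) = sigmaP m p := by
  rw [det_tri _ (fun i hi => by simp [row, hi])]
  rw [Finset.prod_eq_single (⟨0, hm⟩ : Fin m)]
  · simp [row]
  · intro i _ hi
    have : (i : ℕ) ≠ 0 := fun h => hi (Fin.ext h)
    simp [row, this, sigmaP_zero]
  · simp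

lemma alt_scale {m k : ℕ} {A : Type*} [CommRing A] (x : Fin m → A) (a : A)
    (hx : ∀ l, x l ^ (m + k) = - a) (hm : 0 < m) (p : ℕ) (h1 : k + 1 ≤ p) :
    alt x (bet (row m p)) =
      - a * alt x (Function.update (bet (row m p)) ⟨0, hm⟩ (p - 1 - k)) := by
  unfold alt
  apply det_scale _ _ ⟨0, hm⟩
  · intro j hj
    funext l
    simp [hj]
  · funext l
    simp only [Matrix.of_apply, Pi.smul_apply, Function.update_self, smul_eq_mul]
    rw [← hx l, ← pow_add]
    congr 1
    simp [bet, row]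
    omega

lemma alt_zero {m k : ℕ} {A : Type*} [CommRing A] (x : Fin m → A) (a : A)
    (hx : ∀ l, x l ^ (m + k) = - a) (hm : 0 < m) (p : ℕ) (h1 : k + 1 ≤ p) (h2 : p < m + k) :
    alt x (bet (row m p)) = 0 := by
  rw [alt_scale x a hx hm p h1]
  have : (⟨0, hm⟩ : Fin m) ≠ ⟨m - 1 - (p - 1 - k), by omega⟩ := by
    rw [Ne, Fin.ext_iff]
    simp only
    omega
  unfold alt
  rw [Matrix.det_zero_of_row_eq this, mul_zero]
  funext l
  simp only [Matrix.of_apply, Function.update_self, Function.update_of_ne this.symm]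
  congr 1
  simp only [bet, row]
  rw [if_neg (by omega)]
  omega

lemma alt_n {m k : ℕ} {A : Type*} [CommRing A] (x : Fin m → A) (a : A)
    (hx : ∀ l, x l ^ (m + k) = - a) (hm : 0 < m) :
    alt x (bet (row m (m + k))) = - a * alt x (bet (row m 0)) := by
  rw [alt_scale x a hx hm _ (by omega)]
  congr 2
  funext i
  by_cases hi : i = ⟨0, hm⟩
  · subst hi
    simp [bet, row]
    omega
  · rw [Function.update_of_ne hi]
    have : (i : ℕ) ≠ 0 := fun h => hi (Fin.ext h)
    simp [bet, row, this]

lemma map_alt {m : ℕ} {A B : Type*} [CommRing A] [CommRing B] (φ : A →+* B) (x : Fin m → A)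
    (b : Fin m → ℕ) : φ (alt x b) = alt (fun l => φ (x l)) b := by
  unfold alt
  rw [RingHom.map_det]
  congr 1
  ext i j
  simp

/-- weights -/
noncomputable def wt {m : ℕ} {K : Type*} [CommRing K] (n : ℕ) (a : K) (b : Fin m → ℕ)
    (μ : Fin m →₀ ℕ) : K :=
  ∏ l, if μ l % n = b l then (-a) ^ (μ l / n) else 0

lemma wt_add {m : ℕ} {K : Type*} [CommRing K] (n : ℕ) (hn : 0 < n) (a : K) (b : Fin m → ℕ)
    (μ : Fin m →₀ ℕ) (l : Fin m) : wt n a b (μ + Finsupp.single l n) = - a * wt n a b μ := by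
  unfold wt
  rw [← Finset.mul_prod_erase _ _ (Finset.mem_univ l), ← Finset.mul_prod_erase _ _
    (Finset.mem_univ l), ← mul_assoc]
  congr 1
  · simp [Nat.add_div_right _ hn, pow_succ, mul_comm]
  · refine Finset.prod_congr rfl fun i hi => ?_
    have : l ≠ i := (Finset.ne_of_mem_erase hi).symm
    simp [this]

/-- the functional -/
noncomputable def theta {m : ℕ} {K : Type*} [CommRing K] (n : ℕ) (a : K) (b : Fin m → ℕ) :
    MvPolynomial (Fin m) K →ₗ[K] K :=
  (basisMonomials (Fin m) K).constr K (wt n a b)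

lemma theta_monomial {m : ℕ} {K : Type*} [CommRing K] (n : ℕ) (a : K) (b : Fin m → ℕ)
    (μ : Fin m →₀ ℕ) (r : K) : theta n a b (monomial μ r) = r * wt n a b μ := by
  have h : (monomial μ r : MvPolynomial (Fin m) K) = r • basisMonomials (Fin m) K μ := by
    simp [smul_monomial]
  rw [h, map_smul, theta, Module.Basis.constr_basis, smul_eq_mul]

/-- the ideal -/
noncomputable def JJ (m n : ℕ) {K : Type*} [CommRing K] (a : K) : Ideal (MvPolynomial (Fin m) K) :=
  Ideal.span (Set.range fun l : Fin m => X l ^ n + C a)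

lemma theta_JJ {m : ℕ} {K : Type*} [CommRing K] (n : ℕ) (hn : 0 < n) (a : K) (b : Fin m → ℕ)
    (y : MvPolynomial (Fin m) K) (hy : y ∈ JJ m n a) : theta n a b y = 0 := by
  have key : ∀ (l : Fin m) (z : MvPolynomial (Fin m) K),
      theta n a b (z * (X l ^ n + C a)) = 0 := by
    intro l z
    induction z using MvPolynomial.induction_on' with
    | monomial μ r =>
      rw [mul_add, X_pow_eq_monomial, monomial_mul, C_apply, monomial_mul, map_add, theta_monomial,
        theta_monomial, wt_add n hn]
      simp only [add_zero]
      ring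
    | add p q hp hq => rw [add_mul, map_add, hp, hq, add_zero]
  unfold JJ at hy
  suffices h : ∀ z, theta n a b (z * y) = 0 by simpa using h 1
  induction hy using Submodule.span_induction with
  | mem x h =>
    obtain ⟨l, rfl⟩ := h
    exact key l
  | zero => simp
  | add x y _ _ hx hy => intro z; rw [mul_add, map_add, hx, hy, add_zero]
  | smul t x _ hx => intro z; rw [smul_eq_mul, ← mul_assoc]; exact hx _

lemma theta_alt {m : ℕ} {K : Type*} [CommRing K] (n : ℕ) (a : K) (b b' : Fin m → ℕ)
    (hb : StrictAnti b) (hb' : StrictAnti b') (hlt : ∀ i, b i < n) :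
    theta n a b' (alt X b) = if b = b' then 1 else 0 := by
  have hmon : ∀ σ : Equiv.Perm (Fin m), theta n a b' (∏ i, (X i : MvPolynomial (Fin m) K) ^ b (σ i))
      = if b ∘ σ = b' then 1 else 0 := by
    intro σ
    have h1 : ∏ i, (X i : MvPolynomial (Fin m) K) ^ b (σ i) =
        monomial (Finsupp.equivFunOnFinite.symm (b ∘ σ)) 1 := by
      rw [monomial_eq, Finsupp.prod_fintype _ _ (by simp)]
      simp
    rw [h1, theta_monomial, one_mul, wt]
    simp only [Finsupp.equivFunOnFinite_symm_apply_apply, Function.comp_apply,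
      Nat.mod_eq_of_lt (hlt _), Nat.div_eq_of_lt (hlt _), pow_zero]
    rw [Finset.prod_ite_zero]
    simp [funext_iff]
  have hiff : ∀ σ : Equiv.Perm (Fin m), b ∘ σ = b' ↔ σ = 1 ∧ b = b' := by
    intro σ
    constructor
    · intro h
      have hr : Set.range b = Set.range b' := by
        rw [← h, EquivLike.range_comp]
      have h2 : b = b' := (StrictAnti.range_inj hb hb').mp hr
      refine ⟨?_, h2⟩
      ext1 i
      apply hb.injective
      have := congrFun h i
      rw [← h2] at this
      exact this
    · rintro ⟨rfl, rfl⟩; rfl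
  unfold alt
  rw [Matrix.det_apply, map_sum, Finset.sum_eq_single 1]
  · have := hmon 1
    simpa using this
  · intro σ _ hσ
    have := hmon σ
    rw [if_neg (fun h => hσ ((hiff σ).mp h).1)] at this
    simp only [Matrix.of_apply]
    rw [Units.smul_def, map_zsmul, this, smul_zero]
  · simp

/-- The evaluation map. -/
noncomputable def Psi (m : ℕ) : Polynomial (MvPolynomial (Fin m) ℚ) →+*
    MvPolynomial (Fin m) (Polynomial ℚ) :=
  Polynomial.eval₂RingHom (psi m (Polynomial ℚ)) (C Polynomial.X)

lemma Psi_map (m : ℕ) (p : Polynomial ℚ) :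
    Psi m (Polynomial.mapRingHom MvPolynomial.C p) = C p := by
  have : (Psi m).comp (Polynomial.mapRingHom MvPolynomial.C) = C := by
    apply Polynomial.ringHom_ext
    · intro r
      simp [Psi, psi]
    · simp [Psi]
  exact congrArg (fun h => h p) this

lemma Psi_C (m : ℕ) (s : MvPolynomial (Fin m) ℚ) :
    Psi m (Polynomial.C s) = psi m (Polynomial ℚ) s := by
  simp [Psi]

/-- The constant `(-1)^m α q`. -/
noncomputable def aa (m : ℕ) (α : ℚ) : Polynomial ℚ := (-1) ^ m * Polynomial.C α * Polynomial.X

lemma aa_map (m : ℕ) (α : ℚ) : Polynomial.mapRingHom MvPolynomial.C (aa m α) =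
    (-1) ^ m * Polynomial.C (MvPolynomial.C α : MvPolynomial (Fin m) ℚ) * Polynomial.X := by
  simp [aa]

universe u
lemma exists_quot {R : Type u} [CommRing R] (I : Ideal R) :
    ∃ (A : Type u) (_ : CommRing A) (φ : R →+* A), ∀ y, φ y = 0 ↔ y ∈ I :=
  ⟨R ⧸ I, inferInstance, Ideal.Quotient.mk I, fun _ => Ideal.Quotient.eq_zero_iff_mem⟩

lemma spanning' (m k : ℕ) (hm : 0 < m) (α : ℚ) (y : Polynomial (MvPolynomial (Fin m) ℚ)) :
    ∃ f : (Fin m → ℕ) → Polynomial ℚ, y - ∑ lam ∈ parts m k,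
      Polynomial.mapRingHom MvPolynomial.C (f lam) * Polynomial.C (sigmaL m lam)
        ∈ qhIdeal m k α := by
  obtain ⟨A, _, φ, hφ⟩ := exists_quot (qhIdeal m k α)
  obtain ⟨f, hf⟩ := spanning (k := k) φ hm (aa m α)
    (fun p h1 h2 => by
      rw [hφ]
      exact Ideal.subset_span (Or.inl ⟨p, ⟨h1, h2⟩, rfl⟩))
    (by
      rw [← map_add, hφ, aa_map]
      exact Ideal.subset_span (Or.inr rfl)) y
  refine ⟨f, ?_⟩
  rw [← hφ, map_sub, map_sum, hf, sub_eq_zero]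
  simp only [map_mul]

lemma Psi_mem (m k : ℕ) (hm : 0 < m) (α : ℚ) (W : MvPolynomial (Fin m) (Polynomial ℚ))
    (hW : ∀ b : Fin m → ℕ, alt X b = psi m (Polynomial ℚ) (E m b) * W)
    (y : Polynomial (MvPolynomial (Fin m) ℚ)) (hy : y ∈ qhIdeal m k α) :
    Psi m y * W ∈ JJ m (m + k) (aa m α) := by
  obtain ⟨A, _, φ, hφ⟩ := exists_quot (JJ m (m + k) (aa m α))
  have hx : ∀ l : Fin m, (φ (X l)) ^ (m + k) = - φ (C (aa m α)) := by
    intro l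
    rw [← add_eq_zero_iff_eq_neg, ← map_pow, ← map_add, hφ]
    exact Ideal.subset_span ⟨l, rfl⟩
  have hrow : ∀ p : ℕ, psi m (Polynomial ℚ) (sigmaP m p) * W = alt X (bet (row m p)) := by
    intro p
    rw [hW, ← sigmaL_eq, sigmaL_row hm]
  unfold qhIdeal at hy
  induction hy using Submodule.span_induction with
  | mem x h =>
    rw [← hφ]
    rcases h with ⟨p, ⟨hp1, hp2⟩, rfl⟩ | h
    · obtain ⟨p, rfl⟩ : ∃ q : ℕ, p = q := ⟨p.toNat, by omega⟩
      simp only [Psi_C]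
      rw [hrow, map_alt]
      exact alt_zero _ _ hx hm p (by omega) (by omega)
    · rw [Set.mem_singleton_iff] at h
      subst h
      rw [← aa_map, map_add, Psi_map, Psi_C, add_mul, map_add, ← Nat.cast_add, hrow, map_alt,
        alt_n _ _ hx hm, ← map_alt, ← hrow]
      simp [sigmaP_zero]
  | zero => simp
  | add x y _ _ hx hy => rw [map_add, add_mul]; exact Ideal.add_mem _ hx hy
  | smul z x _ hx =>
    rw [smul_eq_mul, map_mul, mul_assoc]
    exact Ideal.mul_mem_left _ _ hx

lemma independence (m k : ℕ) (hm : 0 < m) (α : ℚ) (f f' : (Fin m → ℕ) → Polynomial ℚ)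
    (h : (∑ lam ∈ parts m k, Polynomial.mapRingHom MvPolynomial.C (f lam) *
        Polynomial.C (sigmaL m lam)) -
      ∑ lam ∈ parts m k, Polynomial.mapRingHom MvPolynomial.C (f' lam) *
        Polynomial.C (sigmaL m lam) ∈ qhIdeal m k α)
    (μ : Fin m → ℕ) (hμ : μ ∈ parts m k) : f μ = f' μ := by
  obtain ⟨W, -, hW⟩ := exists_psiW m (Polynomial ℚ)
  have h1 := theta_JJ (m + k) (by omega) _ (bet μ) _ (Psi_mem m k hm α W hW _ h)
  have h2 : ∀ f : (Fin m → ℕ) → Polynomial ℚ, theta (m + k) (aa m α) (bet μ)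
      (Psi m (∑ lam ∈ parts m k, Polynomial.mapRingHom MvPolynomial.C (f lam) *
        Polynomial.C (sigmaL m lam)) * W) = f μ := by
    intro f
    rw [map_sum, Finset.sum_mul, map_sum, Finset.sum_eq_single μ]
    · rw [map_mul (Psi m), Psi_map, Psi_C, mul_assoc, sigmaL_eq, ← hW, ← smul_eq_C_mul, map_smul,
        theta_alt _ _ _ _ (bet_anti hμ).1 (bet_anti hμ).1 (bet_anti hμ).2]
      simp
    · intro lam hl hne
      rw [map_mul (Psi m), Psi_map, Psi_C, mul_assoc, sigmaL_eq, ← hW, ← smul_eq_C_mul, map_smul,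
        theta_alt _ _ _ _ (bet_anti hl).1 (bet_anti hμ).1 (bet_anti hl).2, if_neg, smul_zero]
      intro he
      apply hne
      funext i
      have := congrFun he i
      simp only [bet] at this
      omega
    · exact fun hn => absurd hμ hn
  rw [map_sub, sub_mul, map_sub, h2, h2, sub_eq_zero] at h1
  exact h1

end indep

end QHB


open scoped Classical in
/-- `QH_α` is a free `ℚ[q]`-module with basis `{σ_λ : λ ⊆ m × k}`: every element
has a unique expansion with coefficients in `ℚ[q]` (acting through the natural
map `ℚ[q] → QH_α`) over the classes `σ_λ`, `λ ⊆ m × k`. -/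
theorem qh_free_basis (m k : ℕ) (hm : 0 < m) (hk : 0 < k) (α : ℚ)
    (x : Polynomial (MvPolynomial (Fin m) ℚ) ⧸ qhIdeal m k α) :
    ∃! f : (Fin m → ℕ) → Polynomial ℚ,
      (∀ lam ∉ (Fintype.piFinset fun _ : Fin m => Finset.range (k + 1)) |>.filter
          (fun lam : Fin m → ℕ => ∀ i j : Fin m, i ≤ j → lam j ≤ lam i),
        f lam = 0) ∧
      x = ∑ lam ∈ (Fintype.piFinset fun _ : Fin m => Finset.range (k + 1)) |>.filter
          (fun lam : Fin m → ℕ => ∀ i j : Fin m, i ≤ j → lam j ≤ lam i),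
        ((Ideal.Quotient.mk (qhIdeal m k α)).comp
            (Polynomial.mapRingHom MvPolynomial.C)) (f lam) *
          Ideal.Quotient.mk (qhIdeal m k α) (Polynomial.C (sigmaL m lam)) := by
  change ∃! f : (Fin m → ℕ) → Polynomial ℚ, (∀ lam ∉ QHB.parts m k, f lam = 0) ∧
    x = ∑ lam ∈ QHB.parts m k, Ideal.Quotient.mk (qhIdeal m k α)
      (Polynomial.mapRingHom MvPolynomial.C (f lam)) *
          Ideal.Quotient.mk (qhIdeal m k α) (Polynomial.C (sigmaL m lam))
  obtain ⟨y, rfl⟩ := Ideal.Quotient.mk_surjective x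
  obtain ⟨f, hf⟩ := QHB.spanning' m k hm α y
  have hf' : Ideal.Quotient.mk (qhIdeal m k α) y = ∑ lam ∈ QHB.parts m k,
      Ideal.Quotient.mk (qhIdeal m k α) (Polynomial.mapRingHom MvPolynomial.C (f lam)) *
          Ideal.Quotient.mk (qhIdeal m k α) (Polynomial.C (sigmaL m lam)) := by
    rw [Ideal.Quotient.mk_eq_mk_iff_sub_mem _ _ |>.mpr hf, map_sum]
    exact Finset.sum_congr rfl fun lam _ => map_mul _ _ _
  refine ⟨fun lam => if lam ∈ QHB.parts m k then f lam else 0, ⟨fun lam h => if_neg h, ?_⟩, ?_⟩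
  · refine hf'.trans (Finset.sum_congr rfl fun lam h => ?_)
    simp only [if_pos h]
  · rintro f' ⟨h1, h2⟩
    funext lam
    by_cases h : lam ∈ QHB.parts m k
    · simp only [if_pos h]
      refine QHB.independence m k hm α f' f ?_ lam h
      refine (Ideal.Quotient.mk_eq_mk_iff_sub_mem _ _).mp ?_
      rw [map_sum, map_sum]
      refine Eq.trans (Finset.sum_congr rfl fun lam _ => map_mul _ _ _) (h2.symm.trans
        (hf'.trans (Finset.sum_congr rfl fun lam _ => (map_mul _ _ _).symm)))
    · simp only [if_neg h]
      exact h1 lam h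
end
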